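/- arXiv:0802.0039 — 10 statements merged into one kernel-verified Lean document; each statement's English description precedes it below -/
import Mathlib

section
/- (Volume conjecture for the figure-eight knot, Ekholm.) The sequence a_N := Σ_{k=0}^{N-1} Π_{j=1}^{k} (2 sin(πj/N))², which equals the N-colored Jones polynomial J_N(E; e^{2πi/N}) of the figure-eight knot E evaluated at the N-th root of unity, satisfies lim_{N→∞} (log a_N)/N = (1/π) · Σ_{k=1}^{∞} sin(kπ/3)/k². (Equivalently, 2π · lim_{N→∞} (log a_N)/N equals the hyperbolic volume 2 Im Li₂(e^{iπ/3}) of the figure-eight knot complement.) -/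
/-!
Write `S(N, k) = Σ_{j=1}^k log (2 sin (πj/N))`, so that `a_N = Σ_{k<N} exp (2 S(N, k))`, and let
`Λ(x) = ½ Σ_{k≥1} sin(2kx)/k²` be the Lobachevsky function. The limit is `(2/π) Λ(π/6)`.

* `Λ` is continuous, and `Λ'(x) = -log (2 sin x)` on `(0, π)` (`hasDerivAt_lobachevsky`). This comes
  from the Taylor series of `-log (1 - z)` at `z = r e^{iθ}` by letting `r → 1⁻`. Hence `Λ` attains
  its maximum on `[0, π]` at `π/6` (`lobachevsky_le`), and `Λ(π - x) = -Λ(x)`.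
* Since `log (2 sin x)` is concave on `(0, π)`, its midpoint Riemann sums dominate the integral:
  `S(N, k) ≥ (N/π) (Λ(π/2N) - Λ((2k+1)π/2N))` (`le_logSineSum`). Midpoints avoid the logarithmic
  singularities at the ends of the interval.
* The product formula `Π_{j=1}^{N-1} 2 sin (πj/N) = N` gives `S(N, k) = log N - S(N, N-1-k)`, which
  turns the same lower bound into the uniform upper bound
  `S(N, k) ≤ log N + (N/π) (Λ(π/6) - Λ(π/2N))` (`logSineSum_le`).

Bounding `a_N` below by the single summand `k = ⌊5N/6⌋`, where `-Λ` is asymptotically maximal, and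
above by `N` times the uniform bound squeezes `(log a_N)/N` to `(2/π) Λ(π/6)`.
-/

open scoped Real BigOperators

/-- Kashaev invariant of the figure-eight knot:
`a N = J_N(E; e^{2πi/N}) = Σ_{k=0}^{N-1} Π_{j=1}^{k} (2 sin(πj/N))²`. -/
noncomputable def fig8Kashaev (N : ℕ) : ℝ :=
  ∑ k ∈ Finset.range N, ∏ j ∈ Finset.Icc 1 k,
    (2 * Real.sin (Real.pi * (j : ℝ) / (N : ℝ))) ^ 2

open Filter Topology Set

/-! ### The derivative of the Clausen function -/

/-- The Clausen function `Cl₂(θ) = Σ_{k≥1} sin(kθ)/k²`, with the index shifted to start at `0`. -/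
noncomputable def clausen (θ : ℝ) : ℝ :=
  ∑' k : ℕ, Real.sin ((k + 1 : ℝ) * θ) / ((k + 1 : ℝ) ^ 2)

/-- The Abel regularization `Σ_{k≥1} r^k sin(kθ)/k²` of the Clausen function. -/
noncomputable def clausenAbel (r θ : ℝ) : ℝ :=
  ∑' k : ℕ, r ^ (k + 1) * Real.sin ((k + 1 : ℝ) * θ) / ((k + 1 : ℝ) ^ 2)

lemma summable_inv_succ_sq : Summable fun k : ℕ => 1 / ((k + 1 : ℝ) ^ 2) := by
  have h := (summable_nat_add_iff 1).2 (Real.summable_one_div_nat_pow.2 (le_refl 2))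
  simpa using h

lemma continuous_clausen : Continuous clausen := by
  refine continuous_tsum (fun k => by fun_prop) summable_inv_succ_sq fun k x => ?_
  rw [norm_div, Real.norm_eq_abs, norm_pow, Real.norm_of_nonneg (by positivity : (0:ℝ) ≤ k + 1)]
  gcongr
  exact Real.abs_sin_le_one _

lemma clausenAbel_tendsto (θ : ℝ) :
    Tendsto (fun r => clausenAbel r θ) (𝓝[<] 1) (𝓝 (clausen θ)) := by
  refine tendsto_tsum_of_dominated_convergence summable_inv_succ_sq (fun k => ?_) ?_
  · refine tendsto_nhdsWithin_of_tendsto_nhds ?_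
    have : Continuous fun r : ℝ => r ^ (k + 1) * Real.sin ((k + 1 : ℝ) * θ) / ((k + 1 : ℝ) ^ 2) := by
      fun_prop
    simpa using this.tendsto 1
  · filter_upwards [Ioo_mem_nhdsLT (zero_lt_one' ℝ)] with r hr k
    rw [norm_div, norm_mul, Real.norm_eq_abs (Real.sin _), norm_pow, norm_pow,
      Real.norm_of_nonneg (by positivity : (0:ℝ) ≤ k + 1), Real.norm_of_nonneg hr.1.le]
    gcongr
    exact mul_le_one₀ (pow_le_one₀ hr.1.le hr.2.le) (abs_nonneg _) (Real.abs_sin_le_one _)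

/-- The real part of the Taylor series of `-log (1 - z)` at `z = r e^{iθ}`. -/
lemma hasSum_pow_mul_cos {r : ℝ} (h0 : 0 < r) (h1 : r < 1) (θ : ℝ) :
    HasSum (fun k : ℕ => r ^ (k + 1) * Real.cos ((k + 1 : ℝ) * θ) / (k + 1 : ℝ))
      (-(Real.log (1 - 2 * r * Real.cos θ + r ^ 2) / 2)) := by
  set z : ℂ := r * Complex.exp (θ * Complex.I) with hz
  have hnz : ‖z‖ < 1 := by
    rw [hz, norm_mul, Complex.norm_exp_ofReal_mul_I, Complex.norm_real, mul_one,
      Real.norm_of_nonneg h0.le]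
    exact h1
  have h := Complex.hasSum_re (Complex.hasSum_taylorSeries_neg_log hnz)
  rw [← hasSum_nat_add_iff' 1] at h
  have hre : (-Complex.log (1 - z)).re = -(Real.log (1 - 2 * r * Real.cos θ + r ^ 2) / 2) := by
    have hsq : 1 - 2 * r * Real.cos θ + r ^ 2 = ‖1 - z‖ ^ 2 := by
      rw [← Complex.normSq_eq_norm_sq, Complex.normSq_apply, hz]
      simp only [Complex.sub_re, Complex.sub_im, Complex.one_re, Complex.one_im,
        Complex.re_ofReal_mul, Complex.im_ofReal_mul, Complex.exp_ofReal_mul_I_re,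
        Complex.exp_ofReal_mul_I_im]
      nlinarith [Real.sin_sq_add_cos_sq θ]
    rw [hsq, Real.log_pow, Complex.neg_re, Complex.log_re]
    push_cast
    ring
  rw [hre] at h
  have hfun : ∀ k : ℕ, (z ^ (k + 1) / ((k + 1 : ℕ) : ℂ)).re
      = r ^ (k + 1) * Real.cos ((k + 1 : ℝ) * θ) / (k + 1 : ℝ) := by
    intro k
    have : z ^ (k + 1) / ((k + 1 : ℕ) : ℂ)
        = ((r ^ (k + 1) / (k + 1 : ℝ) : ℝ) : ℂ) * Complex.exp (((k + 1 : ℝ) * θ : ℝ) * Complex.I) := by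
      rw [hz, mul_pow, ← Complex.exp_nat_mul]
      push_cast
      rw [mul_assoc ((k : ℂ) + 1)]
      ring
    rw [this, Complex.re_ofReal_mul, Complex.exp_ofReal_mul_I_re]
    ring
  simp only [hfun, Finset.sum_range_one, pow_zero, Nat.cast_zero, div_zero, Complex.zero_re,
    sub_zero] at h
  exact h

lemma hasDerivAt_clausenAbel {r : ℝ} (h0 : 0 < r) (h1 : r < 1) (θ : ℝ) :
    HasDerivAt (clausenAbel r) (-(Real.log (1 - 2 * r * Real.cos θ + r ^ 2) / 2)) θ := by
  have hu : Summable fun k : ℕ => r ^ (k + 1) :=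
    (summable_nat_add_iff 1).2 (summable_geometric_of_lt_one h0.le h1)
  have hg0 : Summable fun k : ℕ =>
      r ^ (k + 1) * Real.sin ((k + 1 : ℝ) * 0) / ((k + 1 : ℝ) ^ 2) := by
    simp [summable_zero]
  have hg : ∀ (k : ℕ) (y : ℝ), HasDerivAt
      (fun x => r ^ (k + 1) * Real.sin ((k + 1 : ℝ) * x) / ((k + 1 : ℝ) ^ 2))
      (r ^ (k + 1) * Real.cos ((k + 1 : ℝ) * y) / (k + 1 : ℝ)) y := by
    intro k y
    have hk : (k + 1 : ℝ) ≠ 0 := by positivity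
    have := ((((hasDerivAt_id y).const_mul (k + 1 : ℝ)).sin).const_mul (r ^ (k + 1))).div_const
      ((k + 1 : ℝ) ^ 2)
    refine this.congr_deriv ?_
    simp only [id]
    field_simp
  have hg' : ∀ (k : ℕ) (y : ℝ),
      ‖r ^ (k + 1) * Real.cos ((k + 1 : ℝ) * y) / (k + 1 : ℝ)‖ ≤ r ^ (k + 1) := by
    intro k y
    rw [norm_div, norm_mul, Real.norm_eq_abs (Real.cos _), norm_pow,
      Real.norm_of_nonneg (by positivity : (0:ℝ) ≤ k + 1), Real.norm_of_nonneg h0.le]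
    refine div_le_of_le_mul₀ (by positivity) (by positivity) ?_
    gcongr
    exact (Real.abs_cos_le_one _).trans (by simp)
  have h := hasDerivAt_tsum hu hg hg' hg0 θ
  rw [(hasSum_pow_mul_cos h0 h1 θ).tsum_eq] at h
  exact h

/-- Obtained by letting `r → 1⁻` in the derivative of `clausenAbel r`, which converges locally
uniformly on `(0, 2π)`. -/
lemma hasDerivAt_clausen {θ : ℝ} (h0 : 0 < θ) (h1 : θ < 2 * π) :
    HasDerivAt clausen (-Real.log (2 * Real.sin (θ / 2))) θ := by
  have hcos : ∀ x : ℝ, 1 - 2 * 1 * Real.cos x + 1 ^ 2 = (2 * Real.sin (x / 2)) ^ 2 := fun x => by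
    have h := Real.cos_two_mul (x / 2)
    rw [mul_div_cancel₀ x two_ne_zero] at h
    nlinarith [Real.sin_sq_add_cos_sq (x / 2)]
  have hs : 0 < Real.sin (θ / 2) := Real.sin_pos_of_pos_of_lt_pi (by linarith) (by linarith)
  have hval : -Real.log (2 * Real.sin (θ / 2))
      = -(Real.log (1 - 2 * 1 * Real.cos θ + 1 ^ 2) / 2) := by
    rw [hcos, Real.log_pow]
    push_cast
    ring
  rw [hval]
  refine hasDerivAt_of_tendstoUniformlyOnFilter (l := 𝓝[<] (1 : ℝ)) (f := clausenAbel)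
    (f' := fun r x => -(Real.log (1 - 2 * r * Real.cos x + r ^ 2) / 2))
    (g' := fun x => -(Real.log (1 - 2 * 1 * Real.cos x + 1 ^ 2) / 2)) ?_ ?_ ?_
  · rw [tendstoUniformlyOnFilter_iff_tendsto]
    have hne : (1 - 2 * 1 * Real.cos θ + 1 ^ 2 : ℝ) ≠ 0 := by
      rw [hcos]; positivity
    have hc : ContinuousAt (fun q : ℝ × ℝ =>
        ((-(Real.log (1 - 2 * 1 * Real.cos q.2 + 1 ^ 2) / 2) : ℝ),
          (-(Real.log (1 - 2 * q.1 * Real.cos q.2 + q.1 ^ 2) / 2) : ℝ))) (1, θ) := by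
      refine ContinuousAt.prodMk ?_ ?_ <;>
      · refine ((ContinuousAt.log (by fun_prop) ?_).div_const 2).neg
        simpa using hne
    refine Tendsto.mono_left (Tendsto.mono_right hc.tendsto ?_) ?_
    · exact nhds_le_uniformity _
    · rw [nhds_prod_eq]
      exact Filter.prod_mono nhdsWithin_le_nhds le_rfl
  · have : ∀ᶠ r in 𝓝[<] (1 : ℝ), 0 < r ∧ r < 1 := Ioo_mem_nhdsLT (zero_lt_one' ℝ)
    filter_upwards [this.prod_inl (𝓝 θ)] with q hq
    exact hasDerivAt_clausenAbel hq.1 hq.2 q.2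
  · exact Filter.Eventually.of_forall clausenAbel_tendsto

/-! ### The Lobachevsky function -/

/-- The Lobachevsky function `Λ(x) = Cl₂(2x)/2`, which is `-∫₀ˣ log |2 sin t| dt`. -/
noncomputable def lobachevsky (x : ℝ) : ℝ := clausen (2 * x) / 2

lemma continuous_lobachevsky : Continuous lobachevsky :=
  (continuous_clausen.comp (continuous_const.mul continuous_id)).div_const 2

lemma hasDerivAt_lobachevsky {x : ℝ} (h0 : 0 < x) (h1 : x < π) :
    HasDerivAt lobachevsky (-Real.log (2 * Real.sin x)) x := by
  have h := hasDerivAt_clausen (θ := 2 * x) (by linarith) (by linarith)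
  have h2 : HasDerivAt (fun y : ℝ => 2 * y) 2 x := by
    simpa using (hasDerivAt_id x).const_mul (2 : ℝ)
  have h3 := (h.comp x h2).div_const 2
  refine h3.congr_deriv ?_
  rw [mul_div_cancel_left₀ x two_ne_zero]
  ring

lemma lobachevsky_zero : lobachevsky 0 = 0 := by simp [lobachevsky, clausen]

lemma lobachevsky_pi_sub (x : ℝ) : lobachevsky (π - x) = -lobachevsky x := by
  have : clausen (2 * (π - x)) = -clausen (2 * x) := by
    rw [clausen, clausen, ← tsum_neg]
    congr 1
    funext k
    have : (k + 1 : ℝ) * (2 * (π - x)) = ((k + 1 : ℕ) : ℝ) * (2 * π) - (k + 1 : ℝ) * (2 * x) := by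
      push_cast; ring
    rw [this, Real.sin_nat_mul_two_pi_sub, neg_div]
  rw [lobachevsky, lobachevsky, this, neg_div]

/-- `Λ` increases on `[0, π/6]`, decreases on `[π/6, 5π/6]` and increases on `[5π/6, π]` up to
`Λ(π) = 0 = Λ(0)`, since `2 sin x ≥ 1` exactly on the middle interval. -/
lemma lobachevsky_le {x : ℝ} (h0 : 0 ≤ x) (h1 : x ≤ π) : lobachevsky x ≤ lobachevsky (π / 6) := by
  have hpi := Real.pi_pos
  have hderiv : ∀ y, 0 < y → y < π → deriv lobachevsky y = -Real.log (2 * Real.sin y) :=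
    fun y a b => (hasDerivAt_lobachevsky a b).deriv
  have hdiff : ∀ y, 0 < y → y < π → DifferentiableWithinAt ℝ lobachevsky univ y :=
    fun y a b => (hasDerivAt_lobachevsky a b).differentiableAt.differentiableWithinAt
  have hA : MonotoneOn lobachevsky (Icc 0 (π / 6)) := by
    refine monotoneOn_of_deriv_nonneg (convex_Icc _ _) continuous_lobachevsky.continuousOn
      (fun y hy => ?_) (fun y hy => ?_)
    all_goals rw [interior_Icc] at hy
    · exact (hdiff y hy.1 (by linarith [hy.2])).mono (subset_univ _)
    · rw [hderiv y hy.1 (by linarith [hy.2]), neg_nonneg]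
      have h2 := Real.sin_le_sin_of_le_of_le_pi_div_two (by linarith [hy.1]) (by linarith) hy.2.le
      rw [Real.sin_pi_div_six] at h2
      have h3 := Real.sin_pos_of_pos_of_lt_pi hy.1 (by linarith [hy.2])
      exact Real.log_nonpos (by linarith) (by linarith)
  have hB : AntitoneOn lobachevsky (Icc (π / 6) (5 * π / 6)) := by
    refine antitoneOn_of_deriv_nonpos (convex_Icc _ _) continuous_lobachevsky.continuousOn
      (fun y hy => ?_) (fun y hy => ?_)
    all_goals rw [interior_Icc] at hy
    · exact (hdiff y (by linarith [hy.1]) (by linarith [hy.2])).mono (subset_univ _)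
    · rw [hderiv y (by linarith [hy.1]) (by linarith [hy.2]), neg_nonpos]
      refine Real.log_nonneg ?_
      rcases le_total y (π / 2) with h | h
      · have h2 := Real.sin_le_sin_of_le_of_le_pi_div_two (by linarith) h hy.1.le
        rw [Real.sin_pi_div_six] at h2
        linarith
      · have h2 := Real.sin_le_sin_of_le_of_le_pi_div_two (x := π / 6) (y := π - y)
          (by linarith) (by linarith) (by linarith [hy.2])
        rw [Real.sin_pi_div_six, Real.sin_pi_sub] at h2
        linarith
  have hpos : 0 ≤ lobachevsky (π / 6) := by
    rw [← lobachevsky_zero]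
    exact hA ⟨le_rfl, by linarith⟩ ⟨by linarith, le_rfl⟩ (by linarith)
  rcases le_total x (π / 6) with h | h
  · exact hA ⟨h0, h⟩ ⟨by linarith, le_rfl⟩ h
  rcases le_total x (5 * π / 6) with h' | h'
  · exact hB ⟨le_rfl, by linarith⟩ ⟨h, h'⟩ h
  · have h2 : lobachevsky 0 ≤ lobachevsky (π - x) :=
      hA ⟨le_rfl, by linarith⟩ ⟨by linarith, by linarith⟩ (by linarith)
    rw [lobachevsky_pi_sub, lobachevsky_zero] at h2
    linarith

/-- Midpoint inequality for the concave function `log (2 sin x)` on `(0, π)`; the concavity is used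
in the form `sin (x + t) sin (x - t) ≤ sin² x`. -/
lemma lobachevsky_midpoint {x h : ℝ} (hh : 0 ≤ h) (h0 : 0 < x - h) (h1 : x + h < π) :
    lobachevsky (x - h) - lobachevsky (x + h) ≤ 2 * h * Real.log (2 * Real.sin x) := by
  set g : ℝ → ℝ := fun t =>
    lobachevsky (x - t) - lobachevsky (x + t) - 2 * t * Real.log (2 * Real.sin x) with hg
  have hd : ∀ t, 0 ≤ t → t ≤ h → HasDerivAt g (Real.log (2 * Real.sin (x - t))
      + Real.log (2 * Real.sin (x + t)) - 2 * Real.log (2 * Real.sin x)) t := by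
    intro t ht0 ht
    have e1 := (hasDerivAt_lobachevsky (x := x - t) (by linarith) (by linarith)).comp t
      ((hasDerivAt_id t).const_sub x)
    have e2 := (hasDerivAt_lobachevsky (x := x + t) (by linarith) (by linarith)).comp t
      ((hasDerivAt_id t).const_add x)
    have e3 := ((hasDerivAt_id t).const_mul 2).mul_const (Real.log (2 * Real.sin x))
    refine ((e1.sub e2).sub e3).congr_deriv ?_
    ring
  have hanti : AntitoneOn g (Icc 0 h) := by
    refine antitoneOn_of_deriv_nonpos (convex_Icc _ _)
      (fun t ht => (hd t ht.1 ht.2).continuousAt.continuousWithinAt) (fun t ht => ?_) (fun t ht => ?_)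
    all_goals rw [interior_Icc] at ht
    · exact (hd t ht.1.le ht.2.le).differentiableAt.differentiableWithinAt
    · rw [(hd t ht.1.le ht.2.le).deriv]
      obtain ⟨ht0, ht1⟩ := ht
      have s1 := Real.sin_pos_of_pos_of_lt_pi (x := x - t) (by linarith) (by linarith)
      have s2 := Real.sin_pos_of_pos_of_lt_pi (x := x + t) (by linarith) (by linarith)
      have s3 := Real.sin_pos_of_pos_of_lt_pi (x := x) (by linarith) (by linarith)
      have key : (2 * Real.sin (x - t)) * (2 * Real.sin (x + t)) ≤ (2 * Real.sin x) ^ 2 := by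
        have : Real.sin (x - t) * Real.sin (x + t) = Real.sin x ^ 2 - Real.sin t ^ 2 := by
          rw [Real.sin_sub, Real.sin_add]
          linear_combination (Real.sin x ^ 2) * Real.sin_sq_add_cos_sq t
            - Real.sin t ^ 2 * Real.sin_sq_add_cos_sq x
        nlinarith [sq_nonneg (Real.sin t)]
      have := Real.log_le_log (by positivity) key
      rw [Real.log_mul (by positivity) (by positivity), Real.log_pow] at this
      push_cast at this
      linarith
  have := hanti ⟨le_rfl, hh⟩ ⟨hh, le_rfl⟩ hh
  simp only [hg, sub_zero, add_zero, sub_self, mul_zero, zero_mul] at this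
  linarith

/-! ### Log-sine sums -/

/-- The logarithm of `Π_{j=1}^k 2 sin(πj/N)`. -/
noncomputable def logSineSum (N k : ℕ) : ℝ :=
  ∑ j ∈ Finset.Icc 1 k, Real.log (2 * Real.sin (π * j / N))

lemma two_sin_pos {N j : ℕ} (h1 : 1 ≤ j) (h2 : j < N) : 0 < 2 * Real.sin (π * j / N) := by
  have hN : (0 : ℝ) < N := by exact_mod_cast (by omega : 0 < N)
  have hj : (0 : ℝ) < j := by exact_mod_cast h1
  have hjN : (j : ℝ) < N := by exact_mod_cast h2
  have := Real.pi_pos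
  refine mul_pos two_pos (Real.sin_pos_of_pos_of_lt_pi (by positivity) ?_)
  rw [div_lt_iff₀ hN]
  gcongr

lemma prod_eq_exp {N k : ℕ} (hk : k < N) :
    ∏ j ∈ Finset.Icc 1 k, (2 * Real.sin (π * (j : ℝ) / (N : ℝ))) ^ 2
      = Real.exp (2 * logSineSum N k) := by
  rw [logSineSum, Finset.mul_sum, Real.exp_sum]
  refine Finset.prod_congr rfl fun j hj => ?_
  rw [Finset.mem_Icc] at hj
  rw [two_mul (Real.log _), Real.exp_add, Real.exp_log (two_sin_pos hj.1 (by omega)), sq]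

/-- Summing the midpoint inequality over the intervals of length `π/N` centred at `πj/N`. -/
lemma le_logSineSum {N k : ℕ} (hk : k < N) :
    N / π * (lobachevsky (π / (2 * N)) - lobachevsky ((2 * k + 1) * (π / (2 * N))))
      ≤ logSineSum N k := by
  have hN : (0 : ℝ) < N := by exact_mod_cast (by omega : 0 < N)
  have hpi := Real.pi_pos
  induction k with
  | zero => simp [logSineSum]
  | succ k ih =>
    have ih := ih (by omega)
    have hkN : (k : ℝ) + 2 ≤ N := by exact_mod_cast (by omega : k + 2 ≤ N)
    have hm := lobachevsky_midpoint (x := π * (k + 1 : ℕ) / N) (h := π / (2 * N)) (by positivity)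
      (by
        have : π * (k + 1 : ℕ) / N - π / (2 * N) = (2 * k + 1) * (π / (2 * N)) := by
          push_cast; field_simp; ring
        rw [this]; positivity)
      (by
        have : π * (k + 1 : ℕ) / N + π / (2 * N) = π * ((2 * k + 3) / (2 * N)) := by
          push_cast; field_simp; ring
        rw [this]
        have : (2 * k + 3 : ℝ) / (2 * N) < 1 := by
          rw [div_lt_one (by positivity)]; linarith
        nlinarith)
    have e1 : π * (k + 1 : ℕ) / N - π / (2 * N) = (2 * k + 1) * (π / (2 * N)) := by
      push_cast; field_simp; ring
    have e2 : π * (k + 1 : ℕ) / N + π / (2 * N) = (2 * (k + 1 : ℕ) + 1) * (π / (2 * N)) := by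
      push_cast; field_simp
    rw [e1, e2] at hm
    have hm' := mul_le_mul_of_nonneg_left hm (by positivity : (0 : ℝ) ≤ N / π)
    have e3 : N / π * (2 * (π / (2 * N)) * Real.log (2 * Real.sin (π * (k + 1 : ℕ) / N)))
        = Real.log (2 * Real.sin (π * (k + 1 : ℕ) / N)) := by
      field_simp
    rw [e3] at hm'
    have hS : logSineSum N (k + 1)
        = logSineSum N k + Real.log (2 * Real.sin (π * (k + 1 : ℕ) / N)) := by
      rw [logSineSum, logSineSum, Finset.sum_Icc_succ_top (by omega)]
    rw [hS]
    linarith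

/-- The product formula `Π_{j=1}^{N-1} 2 sin(πj/N) = N`, from `|1 - e^{2πij/N}| = 2 sin(πj/N)`. -/
lemma logSineSum_full (n : ℕ) : logSineSum (n + 1) n = Real.log (n + 1) := by
  have hprim := Complex.isPrimitiveRoot_exp (n + 1) (by omega)
  have h := congrArg norm hprim.prod_one_sub_pow_eq_order
  rw [norm_prod] at h
  have hr : ‖((n : ℂ) + 1)‖ = (n + 1 : ℝ) := by
    have : ((n : ℂ) + 1) = ((n + 1 : ℝ) : ℂ) := by push_cast; rfl
    rw [this, Complex.norm_real, Real.norm_of_nonneg (by positivity)]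
  rw [hr] at h
  have hpos : ∀ k ∈ Finset.range n, 0 < 2 * Real.sin (π * (k + 1 : ℕ) / (n + 1 : ℕ)) := fun k hk =>
    two_sin_pos (by omega) (by rw [Finset.mem_range] at hk; omega)
  have hterm : ∀ k ∈ Finset.range n,
      ‖1 - Complex.exp (2 * π * Complex.I / (n + 1 : ℕ)) ^ (k + 1)‖
        = 2 * Real.sin (π * (k + 1 : ℕ) / (n + 1 : ℕ)) := by
    intro k hk
    have e : Complex.exp (2 * π * Complex.I / (n + 1 : ℕ)) ^ (k + 1)
        = Complex.exp (Complex.I * ((2 * (π * (k + 1 : ℕ) / (n + 1 : ℕ)) : ℝ) : ℂ)) := by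
      rw [← Complex.exp_nat_mul]
      congr 1
      push_cast
      ring
    rw [e, norm_sub_rev, Complex.norm_exp_I_mul_ofReal_sub_one,
      mul_div_cancel_left₀ _ (two_ne_zero' ℝ), Real.norm_of_nonneg (hpos k hk).le]
  rw [Finset.prod_congr rfl hterm] at h
  rw [← h, Real.log_prod (fun k hk => (hpos k hk).ne'), logSineSum, ← Finset.sum_image
    (f := fun j : ℕ => Real.log (2 * Real.sin (π * (j : ℝ) / ((n + 1 : ℕ) : ℝ))))
    (g := fun k : ℕ => k + 1) (fun a _ b _ hab => by simpa using hab)]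
  congr 1
  ext j
  simp only [Finset.mem_Icc, Finset.mem_image, Finset.mem_range]
  exact ⟨fun hj => ⟨j - 1, by omega, by omega⟩, fun ⟨a, ha, hj⟩ => by omega⟩

/-- Reflection `j ↦ N - j` applied to the product formula. -/
lemma logSineSum_add {n k : ℕ} (hk : k ≤ n) :
    logSineSum (n + 1) k + logSineSum (n + 1) (n - k) = Real.log (n + 1) := by
  rw [← logSineSum_full n]
  have hsplit : logSineSum (n + 1) n = logSineSum (n + 1) k
      + ∑ j ∈ Finset.Icc (k + 1) n, Real.log (2 * Real.sin (π * j / (n + 1 : ℕ))) := by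
    rw [logSineSum, logSineSum, ← Finset.sum_union]
    · congr 1
      ext j
      simp only [Finset.mem_union, Finset.mem_Icc]
      omega
    · rw [Finset.disjoint_left]
      intro j
      simp only [Finset.mem_Icc]
      omega
  rw [hsplit]
  congr 1
  rw [logSineSum]
  refine Finset.sum_bij' (fun j _ => n + 1 - j) (fun j _ => n + 1 - j) ?_ ?_ ?_ ?_ ?_
  · intro j hj; rw [Finset.mem_Icc] at *; omega
  · intro j hj; rw [Finset.mem_Icc] at *; omega
  · intro j hj; rw [Finset.mem_Icc] at *; omega
  · intro j hj; rw [Finset.mem_Icc] at *; omega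
  · intro j hj
    rw [Finset.mem_Icc] at hj
    rw [Nat.cast_sub (by omega : j ≤ n + 1), mul_sub, sub_div,
      mul_div_cancel_right₀ π (by positivity), Real.sin_pi_sub]

/-- The lower bound for `logSineSum N (N - 1 - k)` becomes an upper bound by reflection. -/
lemma logSineSum_le {N k : ℕ} (hk : k < N) :
    logSineSum N k
      ≤ Real.log N + N / π * (lobachevsky (π / 6) - lobachevsky (π / (2 * N))) := by
  obtain ⟨n, rfl⟩ : ∃ n, N = n + 1 := ⟨N - 1, by omega⟩
  have h1 := logSineSum_add (Nat.le_of_lt_succ hk)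
  have h2 := le_logSineSum (N := n + 1) (k := n - k) (by omega)
  have hpi := Real.pi_pos
  have h3 : lobachevsky ((2 * (n - k : ℕ) + 1) * (π / (2 * (n + 1 : ℕ)))) ≤ lobachevsky (π / 6) := by
    refine lobachevsky_le (by positivity) ?_
    have : (2 * (n - k : ℕ) + 1 : ℝ) ≤ 2 * (n + 1 : ℕ) := by
      exact_mod_cast (by omega : 2 * (n - k) + 1 ≤ 2 * (n + 1))
    calc (2 * (n - k : ℕ) + 1) * (π / (2 * (n + 1 : ℕ)))
        ≤ (2 * (n + 1 : ℕ)) * (π / (2 * (n + 1 : ℕ))) := by gcongr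
      _ = π := by field_simp
  have h4 := mul_le_mul_of_nonneg_left h3 (by positivity : (0 : ℝ) ≤ ((n + 1 : ℕ) : ℝ) / π)
  push_cast at *
  linarith

/-! ### Bounds for the Kashaev invariant -/

lemma fig8Kashaev_lower {N k : ℕ} (hk : k < N) :
    2 / π * (lobachevsky (π / (2 * N)) - lobachevsky ((2 * k + 1) * (π / (2 * N))))
      ≤ Real.log (fig8Kashaev N) / N := by
  have hN : (0 : ℝ) < N := by exact_mod_cast (by omega : 0 < N)
  have h1 : Real.exp (2 * logSineSum N k) ≤ fig8Kashaev N := by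
    rw [← prod_eq_exp hk, fig8Kashaev]
    exact Finset.single_le_sum (f := fun k : ℕ => ∏ j ∈ Finset.Icc 1 k,
      (2 * Real.sin (Real.pi * (j : ℝ) / (N : ℝ))) ^ 2)
      (fun i _ => Finset.prod_nonneg fun j _ => sq_nonneg _) (Finset.mem_range.2 hk)
  have h2 := Real.log_le_log (Real.exp_pos _) h1
  rw [Real.log_exp] at h2
  rw [le_div_iff₀ hN]
  have h3 := le_logSineSum hk
  calc _ = 2 * (N / π * (lobachevsky (π / (2 * N))
            - lobachevsky ((2 * k + 1) * (π / (2 * N))))) := by ring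
    _ ≤ 2 * logSineSum N k := by gcongr
    _ ≤ _ := h2

lemma fig8Kashaev_upper {N : ℕ} (hN0 : 0 < N) :
    Real.log (fig8Kashaev N) / N
      ≤ 3 * (Real.log N / N) + 2 / π * (lobachevsky (π / 6) - lobachevsky (π / (2 * N))) := by
  have hN : (0 : ℝ) < N := by exact_mod_cast hN0
  set B := Real.log N + N / π * (lobachevsky (π / 6) - lobachevsky (π / (2 * N))) with hB
  have h1 : fig8Kashaev N ≤ N * Real.exp (2 * B) := by
    have : fig8Kashaev N ≤ (Finset.range N).card • Real.exp (2 * B) := by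
      refine Finset.sum_le_card_nsmul _ _ _ fun k hk => ?_
      rw [Finset.mem_range] at hk
      rw [prod_eq_exp hk]
      have := logSineSum_le hk
      gcongr
    simpa using this
  have hpos : 0 < fig8Kashaev N := by
    refine Finset.sum_pos (fun k hk => ?_) ⟨0, Finset.mem_range.2 hN0⟩
    rw [prod_eq_exp (Finset.mem_range.1 hk)]
    positivity
  have h2 := Real.log_le_log hpos h1
  rw [Real.log_mul hN.ne' (Real.exp_pos _).ne', Real.log_exp] at h2
  rw [div_le_iff₀ hN]
  refine h2.trans (le_of_eq ?_)
  rw [hB]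
  field_simp
  ring

/-- Volume conjecture for the figure-eight knot (Ekholm):
`lim_{N→∞} (log a_N)/N = (1/π) Σ_{k≥1} sin(kπ/3)/k²`. -/
theorem volume_conjecture_figure_eight :
    Filter.Tendsto (fun N : ℕ => Real.log (fig8Kashaev N) / (N : ℝ))
      Filter.atTop
      (nhds ((1 / Real.pi) *
        ∑' k : ℕ, Real.sin ((k + 1 : ℝ) * Real.pi / 3) / ((k + 1 : ℝ) ^ 2))) := by
  have hpi := Real.pi_pos
  have hlim : (1 / Real.pi) * ∑' k : ℕ, Real.sin ((k + 1 : ℝ) * Real.pi / 3) / ((k + 1 : ℝ) ^ 2)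
      = 2 / π * lobachevsky (π / 6) := by
    have : 2 * (π / 6) = π / 3 := by ring
    rw [lobachevsky, clausen, this]
    simp only [mul_div_assoc]
    ring
  rw [hlim]
  have hinv : Tendsto (fun N : ℕ => π / (2 * (N : ℝ))) atTop (𝓝 0) :=
    Tendsto.const_div_atTop (tendsto_natCast_atTop_atTop.const_mul_atTop two_pos) π
  have hzero : Tendsto (fun N : ℕ => lobachevsky (π / (2 * (N : ℝ)))) atTop (𝓝 0) := by
    have := (continuous_lobachevsky.tendsto 0).comp hinv
    rwa [lobachevsky_zero] at this
  have hlog : Tendsto (fun N : ℕ => Real.log (N : ℝ) / N) atTop (𝓝 0) :=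
    (Real.isLittleO_log_id_atTop.tendsto_div_nhds_zero).comp tendsto_natCast_atTop_atTop
  -- The largest summand sits near `k = 5N/6`, where the factors `2 sin(πk/N)` drop below `1`.
  have hfloor : Tendsto (fun N : ℕ => (2 * (⌊(5 / 6 : ℝ) * (N : ℝ)⌋₊ : ℝ) + 1) * (π / (2 * (N : ℝ))))
      atTop (𝓝 (π - π / 6)) := by
    have h := (tendsto_nat_floor_mul_div_atTop (R := ℝ) (a := 5 / 6) (by norm_num)).comp
      tendsto_natCast_atTop_atTop
    have h2 := (h.mul_const π).add hinv
    have e : (5 / 6 : ℝ) * π + 0 = π - π / 6 := by ring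
    rw [e] at h2
    refine h2.congr fun N => ?_
    simp only [Function.comp]
    rcases eq_or_ne (N : ℝ) 0 with h0 | h0
    · simp [h0]
    · field_simp
  have hlow : Tendsto (fun N : ℕ => 2 / π * (lobachevsky (π / (2 * (N : ℝ)))
      - lobachevsky ((2 * (⌊(5 / 6 : ℝ) * (N : ℝ)⌋₊ : ℝ) + 1) * (π / (2 * (N : ℝ))))))
      atTop (𝓝 (2 / π * lobachevsky (π / 6))) := by
    have h := (hzero.sub ((continuous_lobachevsky.tendsto _).comp hfloor)).const_mul (2 / π)
    rw [lobachevsky_pi_sub, zero_sub, neg_neg] at h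
    exact h
  have hup : Tendsto (fun N : ℕ => 3 * (Real.log (N : ℝ) / N)
      + 2 / π * (lobachevsky (π / 6) - lobachevsky (π / (2 * (N : ℝ)))))
      atTop (𝓝 (2 / π * lobachevsky (π / 6))) := by
    have h := (hlog.const_mul 3).add ((hzero.const_sub (lobachevsky (π / 6))).const_mul (2 / π))
    rwa [mul_zero, zero_add, sub_zero] at h
  refine tendsto_of_tendsto_of_tendsto_of_le_of_le' hlow hup ?_ ?_
  · filter_upwards [eventually_gt_atTop 0] with N hN
    refine fig8Kashaev_lower ?_
    have hN' : (0 : ℝ) < N := by exact_mod_cast hN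
    rw [Nat.floor_lt (by positivity)]
    linarith
  · filter_upwards [eventually_gt_atTop 0] with N hN
    exact fig8Kashaev_upper hN
end

section
/- Let θ be a real number with θ ≥ log((3+√5)/2) (i.e. θ ≥ arccosh(3/2)). Set φ̃(θ) := log(cosh θ − 1/2 + √((cosh θ − 1/2)² − 1)) (so cosh φ̃(θ) = cosh θ − 1/2 and 0 ≤ φ̃(θ) < θ), and H̃(θ) := Li₂(e^{−φ̃(θ)−θ}) − Li₂(e^{φ̃(θ)−θ}) + θ·φ̃(θ). Then the colored Jones polynomials of the figure-eight knot E satisfy θ · lim_{N→∞} (log J_N(E; e^{θ/N}))/N = H̃(θ), where J_N(E; e^{θ/N}) is a positive real number. In particular, when θ = log((3+√5)/2) one has H̃(θ) = 0 and the limit is 0. -/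
/-!
The `j`-th factor of the product is `2 cosh θ - 2 cosh (jθ/N)`, so with `h = θ/N` and
`G u = log (2 cosh θ - 2 cosh u)`, the logarithm of the `k`-th summand is `∑_{j ≤ k} G (j h)`.
Since `2 cosh θ - 2 cosh u = e^θ (1 - e^{u-θ}) (1 - e^{-u-θ})` and `Li₂' x = -log (1 - x) / x`, the
function `F u = Li₂ (e^{-u-θ}) - Li₂ (e^{u-θ}) + θ u` is an antiderivative of `G` on `(-θ, θ)` with
`F 0 = 0` (`fig8F_hasDerivAt`), and `H̃ θ = F φ` for `φ = φ̃ θ`.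

As `G` is decreasing on `[0, θ)` with `G φ = 0`, the function `F` is maximal at `φ`, and the mean
value theorem compares `h ∑_{j ≤ k} G (j h)` with `F` (`fig8_sum_le`, `fig8_le_sum`): every summand
contributes at most `F φ`, and the summand `k = ⌊φ / h⌋` contributes at least
`F ((k + 1) h) - F h`. Hence, for large `N`,
`F ((k + 1) h) - F h ≤ θ log J_N / N ≤ F φ + θ log N / N`,
and both ends tend to `F φ` because `F` is continuous at `0` and at `φ < θ`.
-/

open scoped Real BigOperators

/-- The `N`-colored Jones polynomial of the figure-eight knot evaluated at `q = e^{θ/N}`,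
for a real parameter `θ` (a positive real number for `θ > 0`). -/
noncomputable def fig8JonesReal (N : ℕ) (θ : ℝ) : ℝ :=
  ∑ k ∈ Finset.range N, ∏ j ∈ Finset.Icc 1 k,
    ((Real.exp (((N : ℝ) - j) * θ / (2 * N)) - Real.exp (-(((N : ℝ) - j) * θ) / (2 * N))) *
     (Real.exp (((N : ℝ) + j) * θ / (2 * N)) - Real.exp (-(((N : ℝ) + j) * θ) / (2 * N))))

/-- Real dilogarithm `Li₂(x) = Σ_{k≥1} x^k/k²`. -/
noncomputable def Li2Real (x : ℝ) : ℝ := ∑' k : ℕ, x ^ (k + 1) / ((k + 1 : ℝ) ^ 2)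

/-- `φ̃(θ) = arccosh(cosh θ − 1/2)`, the usual positive branch. -/
noncomputable def phiTilde (θ : ℝ) : ℝ :=
  Real.log (Real.cosh θ - 1 / 2 + Real.sqrt ((Real.cosh θ - 1 / 2) ^ 2 - 1))

/-- `H̃(θ) = Li₂(e^{−φ̃(θ)−θ}) − Li₂(e^{φ̃(θ)−θ}) + θ·φ̃(θ)`. -/
noncomputable def HTilde (θ : ℝ) : ℝ :=
  Li2Real (Real.exp (-phiTilde θ - θ)) - Li2Real (Real.exp (phiTilde θ - θ)) +
    θ * phiTilde θ

theorem Li2Real_hasDerivAt {x : ℝ} (hx0 : 0 < x) (hx1 : x < 1) :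
    HasDerivAt Li2Real (-Real.log (1 - x) / x) x := by
  obtain ⟨r, hxr, hr1⟩ := exists_between hx1
  have hr0 : 0 < r := hx0.trans hxr
  have hsum : ∑' k : ℕ, x ^ k / ((k : ℝ) + 1) = -Real.log (1 - x) / x := by
    have h := (Real.hasSum_pow_div_log_of_abs_lt_one
      (x := x) (by rw [abs_of_pos hx0]; exact hx1)).div_const x
    rw [← h.tsum_eq]
    refine tsum_congr fun k => ?_
    rw [pow_succ]
    field_simp
  rw [← hsum]
  unfold Li2Real
  refine hasDerivAt_tsum_of_isPreconnected (u := fun k => r ^ k) (t := Set.Ioo (-r) r) (y₀ := 0)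
    (g := fun (k : ℕ) (y : ℝ) => y ^ (k + 1) / ((k + 1 : ℝ) ^ 2))
    (g' := fun (k : ℕ) (y : ℝ) => y ^ k / ((k : ℝ) + 1))
    (summable_geometric_of_lt_one hr0.le hr1) isOpen_Ioo isPreconnected_Ioo ?_ ?_ ?_ ?_ ?_
  · intro k y _
    have h := (hasDerivAt_pow (k + 1) y).div_const ((k + 1 : ℝ) ^ 2)
    refine h.congr_deriv ?_
    push_cast
    have : (k : ℝ) + 1 ≠ 0 := by positivity
    field_simp
  · intro k y hy
    rw [norm_div, norm_pow, Real.norm_eq_abs, Real.norm_eq_abs,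
      abs_of_pos (by positivity : (0 : ℝ) < (k : ℝ) + 1)]
    have h1 : |y| ^ k ≤ r ^ k := pow_le_pow_left₀ (abs_nonneg y) (abs_lt.mpr hy).le k
    refine (div_le_self (by positivity) ?_).trans h1
    have : (0 : ℝ) ≤ k := k.cast_nonneg
    linarith
  · exact ⟨by linarith, hr0⟩
  · simp
  · exact ⟨by linarith, hxr⟩

/-- The logarithm of the continuous version of a factor of the colored Jones polynomial: the
`j`-th factor is `exp (fig8G θ (j * (θ / N)))` for `0 < θ` and `j < N`. -/
noncomputable def fig8G (θ u : ℝ) : ℝ := Real.log (2 * Real.cosh θ - 2 * Real.cosh u)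

/-- The antiderivative of `fig8G θ` vanishing at `0`; its value at `phiTilde θ` is `HTilde θ`. -/
noncomputable def fig8F (θ u : ℝ) : ℝ :=
  Li2Real (Real.exp (-u - θ)) - Li2Real (Real.exp (u - θ)) + θ * u

theorem fig8F_zero (θ : ℝ) : fig8F θ 0 = 0 := by simp [fig8F]

theorem fig8F_hasDerivAt {θ u : ℝ} (hu : |u| < θ) : HasDerivAt (fig8F θ) (fig8G θ u) u := by
  obtain ⟨h1, h2⟩ := abs_lt.mp hu
  have e1 : Real.exp (-u - θ) < 1 := Real.exp_lt_one_iff.mpr (by linarith)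
  have e2 : Real.exp (u - θ) < 1 := Real.exp_lt_one_iff.mpr (by linarith)
  have d1 := (Li2Real_hasDerivAt (Real.exp_pos (-u - θ)) e1).comp u
    (((hasDerivAt_id u).neg.sub_const θ).exp)
  have d2 := (Li2Real_hasDerivAt (Real.exp_pos (u - θ)) e2).comp u
    (((hasDerivAt_id u).sub_const θ).exp)
  have d3 := (d1.sub d2).add ((hasDerivAt_id u).const_mul θ)
  refine d3.congr_deriv ?_
  have key : 2 * Real.cosh θ - 2 * Real.cosh u
      = Real.exp θ * ((1 - Real.exp (u - θ)) * (1 - Real.exp (-u - θ))) := by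
    have a : Real.exp θ * Real.exp (u - θ) = Real.exp u := by
      rw [← Real.exp_add]; congr 1; ring
    have b : Real.exp θ * Real.exp (-u - θ) = Real.exp (-u) := by
      rw [← Real.exp_add]; congr 1; ring
    have c : Real.exp θ * (Real.exp (u - θ) * Real.exp (-u - θ)) = Real.exp (-θ) := by
      rw [← Real.exp_add, ← Real.exp_add]; congr 1; ring
    rw [Real.cosh_eq, Real.cosh_eq]
    linear_combination a + b - c
  rw [fig8G, key, Real.log_mul (Real.exp_pos θ).ne'
    (mul_pos (sub_pos.mpr e2) (sub_pos.mpr e1)).ne',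
    Real.log_mul (sub_pos.mpr e2).ne' (sub_pos.mpr e1).ne', Real.log_exp]
  simp only [id_eq, Pi.neg_apply]
  field_simp
  ring

theorem fig8G_anti {θ a b : ℝ} (ha : 0 ≤ a) (hab : a ≤ b) (hb : b < θ) :
    fig8G θ b ≤ fig8G θ a := by
  have h1 : Real.cosh a ≤ Real.cosh b := by
    rw [Real.cosh_le_cosh, abs_of_nonneg ha, abs_of_nonneg (ha.trans hab)]; exact hab
  have h2 : Real.cosh b < Real.cosh θ := by
    rw [Real.cosh_lt_cosh, abs_of_nonneg (ha.trans hab), abs_of_nonneg (by linarith)]; exact hb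
  exact Real.log_le_log (by linarith) (by linarith)

/-- Mean value bounds for `fig8F`, whose derivative `fig8G` is decreasing. -/
theorem fig8F_sub_bounds {θ a b : ℝ} (ha : 0 ≤ a) (hab : a ≤ b) (hb : b < θ) :
    fig8G θ b * (b - a) ≤ fig8F θ b - fig8F θ a ∧
      fig8F θ b - fig8F θ a ≤ fig8G θ a * (b - a) := by
  rcases hab.eq_or_lt with rfl | hlt
  · simp
  have hd : ∀ x ∈ Set.Icc a b, HasDerivAt (fig8F θ) (fig8G θ x) x := fun x hx =>
    fig8F_hasDerivAt (by rw [abs_of_nonneg (ha.trans hx.1)]; exact hx.2.trans_lt hb)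
  obtain ⟨c, hc, hslope⟩ := exists_hasDerivAt_eq_slope (fig8F θ) (fig8G θ) hlt
    (fun x hx => (hd x hx).continuousAt.continuousWithinAt)
    (fun x hx => hd x (Set.Ioo_subset_Icc_self hx))
  have hpos : 0 < b - a := sub_pos.mpr hlt
  rw [eq_div_iff hpos.ne'] at hslope
  rw [← hslope]
  exact ⟨mul_le_mul_of_nonneg_right (fig8G_anti (ha.trans hc.1.le) hc.2.le hb) hpos.le,
    mul_le_mul_of_nonneg_right (fig8G_anti ha hc.1.le (hc.2.trans hb)) hpos.le⟩

theorem fig8_sum_le {θ h : ℝ} (hh : 0 ≤ h) (k : ℕ) (hk : k * h < θ) :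
    h * ∑ j ∈ Finset.Icc 1 k, fig8G θ (j * h) ≤ fig8F θ (k * h) := by
  induction k with
  | zero => simp [fig8F_zero]
  | succ k ih =>
    push_cast at hk
    have hle : (k : ℝ) * h ≤ (k + 1) * h := by linarith
    have h1 := (fig8F_sub_bounds (by positivity) hle hk).1
    have h2 := ih (hle.trans_lt hk)
    rw [Finset.sum_Icc_succ_top (by omega)]
    push_cast
    linarith

theorem fig8_le_sum {θ h : ℝ} (hh : 0 ≤ h) (k : ℕ) (hk : (k + 1) * h < θ) :
    fig8F θ ((k + 1) * h) - fig8F θ h ≤ h * ∑ j ∈ Finset.Icc 1 k, fig8G θ (j * h) := by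
  induction k with
  | zero => simp
  | succ k ih =>
    push_cast at hk
    have hle : ((k : ℝ) + 1) * h ≤ (k + 1 + 1) * h := by linarith
    have h1 := (fig8F_sub_bounds (by positivity) hle hk).2
    have h2 := ih (hle.trans_lt hk)
    rw [Finset.sum_Icc_succ_top (by omega)]
    push_cast
    linarith

theorem fig8_factor (N : ℕ) (hN : 0 < N) (θ : ℝ) (j : ℕ) :
    (Real.exp (((N : ℝ) - j) * θ / (2 * N)) - Real.exp (-(((N : ℝ) - j) * θ) / (2 * N))) *
     (Real.exp (((N : ℝ) + j) * θ / (2 * N)) - Real.exp (-(((N : ℝ) + j) * θ) / (2 * N)))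
    = 2 * Real.cosh θ - 2 * Real.cosh (j * (θ / N)) := by
  have hN' : (N : ℝ) ≠ 0 := by positivity
  rw [Real.cosh_eq, Real.cosh_eq, sub_mul, mul_sub, mul_sub, ← Real.exp_add, ← Real.exp_add,
    ← Real.exp_add, ← Real.exp_add]
  have a1 : ((N : ℝ) - j) * θ / (2 * N) + ((N : ℝ) + j) * θ / (2 * N) = θ := by
    field_simp; ring
  have a2 : ((N : ℝ) - j) * θ / (2 * N) + -(((N : ℝ) + j) * θ) / (2 * N) = -(j * (θ / N)) := by
    field_simp; ring
  have a3 : -(((N : ℝ) - j) * θ) / (2 * N) + ((N : ℝ) + j) * θ / (2 * N) = j * (θ / N) := by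
    field_simp; ring
  have a4 : -(((N : ℝ) - j) * θ) / (2 * N) + -(((N : ℝ) + j) * θ) / (2 * N) = -θ := by
    field_simp; ring
  rw [a1, a2, a3, a4]
  ring

theorem fig8Jones_eq {N : ℕ} (hN : 0 < N) {θ : ℝ} (hθ : 0 < θ) :
    fig8JonesReal N θ = ∑ k ∈ Finset.range N,
      Real.exp (∑ j ∈ Finset.Icc 1 k, fig8G θ (j * (θ / N))) := by
  unfold fig8JonesReal
  refine Finset.sum_congr rfl fun k hk => ?_
  rw [Real.exp_sum]
  refine Finset.prod_congr rfl fun j hj => ?_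
  rw [fig8_factor N hN, fig8G, Real.exp_log]
  have hjN : (j : ℝ) < N := by
    exact_mod_cast (Finset.mem_Icc.mp hj).2.trans_lt (Finset.mem_range.mp hk)
  have hN' : (0 : ℝ) < N := by exact_mod_cast hN
  have : Real.cosh (j * (θ / N)) < Real.cosh θ := by
    rw [Real.cosh_lt_cosh, abs_of_nonneg (by positivity), abs_of_pos hθ, ← mul_div_assoc,
      div_lt_iff₀ hN']
    nlinarith
  linarith

theorem fig8_threshold : Real.cosh (Real.log ((3 + Real.sqrt 5) / 2)) = 3 / 2 := by
  have h5 : Real.sqrt 5 ^ 2 = 5 := Real.sq_sqrt (by norm_num)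
  have hpos : 0 < (3 + Real.sqrt 5) / 2 := by positivity
  rw [Real.cosh_log hpos]
  field_simp
  nlinarith

theorem fig8_threshold_pos : 0 < Real.log ((3 + Real.sqrt 5) / 2) := by
  refine Real.log_pos ?_
  have := Real.sqrt_nonneg 5
  linarith

/-- `F` is maximal at the zero `φ` of its derivative, so every summand is at most
`exp (F φ / h)`, and so `log J_N ≤ log N + F φ / h`. -/
theorem fig8_upper {N : ℕ} (hN : 0 < N) {θ φ : ℝ} (hθ : 0 < θ) (hφ0 : 0 ≤ φ) (hφ : φ < θ)
    (hG : fig8G θ φ = 0) :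
    θ * (Real.log (fig8JonesReal N θ) / N) ≤ fig8F θ φ + θ * (Real.log N / N) := by
  have hN' : (0 : ℝ) < N := by exact_mod_cast hN
  have hh : 0 < θ / N := by positivity
  have hmax : ∀ u, 0 ≤ u → u < θ → fig8F θ u ≤ fig8F θ φ := by
    intro u hu0 hu
    rcases le_total u φ with h | h
    · have := (fig8F_sub_bounds hu0 h hφ).1
      rw [hG] at this
      linarith
    · have := (fig8F_sub_bounds hφ0 h hu).2
      rw [hG] at this
      linarith
  have hJ : fig8JonesReal N θ ≤ N * Real.exp (fig8F θ φ / (θ / N)) := by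
    rw [fig8Jones_eq hN hθ]
    refine (Finset.sum_le_card_nsmul _ _ (Real.exp (fig8F θ φ / (θ / N))) fun k hk => ?_).trans ?_
    · have hkN : (k : ℝ) < N := by exact_mod_cast Finset.mem_range.mp hk
      have hk' : k * (θ / N) < θ := by
        rw [← mul_div_assoc, div_lt_iff₀ hN']
        nlinarith
      rw [Real.exp_le_exp, le_div_iff₀ hh, mul_comm]
      exact (fig8_sum_le hh.le k hk').trans (hmax _ (by positivity) hk')
    · simp
  have hJpos : 0 < fig8JonesReal N θ := by
    rw [fig8Jones_eq hN hθ]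
    exact Finset.sum_pos (fun _ _ => Real.exp_pos _) ⟨0, Finset.mem_range.mpr hN⟩
  have hlog := Real.log_le_log hJpos hJ
  rw [Real.log_mul hN'.ne' (Real.exp_pos _).ne', Real.log_exp] at hlog
  calc θ * (Real.log (fig8JonesReal N θ) / N)
      = θ / N * Real.log (fig8JonesReal N θ) := by ring
    _ ≤ θ / N * (Real.log N + fig8F θ φ / (θ / N)) := mul_le_mul_of_nonneg_left hlog hh.le
    _ = fig8F θ φ + θ * (Real.log N / N) := by
      rw [mul_add, mul_div_cancel₀ _ hh.ne']
      ring

theorem fig8_lower {N : ℕ} (hN : 0 < N) {θ : ℝ} (hθ : 0 < θ) (k : ℕ)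
    (hk : (k + 1) * (θ / N) < θ) :
    fig8F θ ((k + 1) * (θ / N)) - fig8F θ (θ / N) ≤
      θ * (Real.log (fig8JonesReal N θ) / N) := by
  have hN' : (0 : ℝ) < N := by exact_mod_cast hN
  have hh : 0 < θ / N := by positivity
  have hkN : k < N := by
    rw [← mul_div_assoc, div_lt_iff₀ hN', mul_comm θ] at hk
    have : (k : ℝ) + 1 < N := lt_of_mul_lt_mul_right hk hθ.le
    have : (k : ℝ) < N := by linarith
    exact_mod_cast this
  have hJ : Real.exp (∑ j ∈ Finset.Icc 1 k, fig8G θ (j * (θ / N))) ≤ fig8JonesReal N θ := by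
    rw [fig8Jones_eq hN hθ]
    exact Finset.single_le_sum
      (f := fun k : ℕ => Real.exp (∑ j ∈ Finset.Icc 1 k, fig8G θ (j * (θ / N))))
      (fun _ _ => (Real.exp_pos _).le) (Finset.mem_range.mpr hkN)
  have hlog := Real.log_le_log (Real.exp_pos _) hJ
  rw [Real.log_exp] at hlog
  calc _ ≤ θ / N * ∑ j ∈ Finset.Icc 1 k, fig8G θ (j * (θ / N)) := fig8_le_sum hh.le k hk
    _ ≤ θ / N * Real.log (fig8JonesReal N θ) := mul_le_mul_of_nonneg_left hlog hh.le
    _ = θ * (Real.log (fig8JonesReal N θ) / N) := by ring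

/-- Asymptotics of the colored Jones polynomials of the figure-eight knot for real
`θ ≥ arccosh(3/2) = log((3+√5)/2)`:
`θ · lim_{N→∞} (log J_N(E; e^{θ/N}))/N = H̃(θ)`; in particular the limit vanishes at
`θ = log((3+√5)/2)` since `H̃` vanishes there. -/
theorem fig8_real_theta_asymptotics (θ : ℝ)
    (hθ : Real.log ((3 + Real.sqrt 5) / 2) ≤ θ) :
    Filter.Tendsto (fun N : ℕ => θ * (Real.log (fig8JonesReal N θ) / (N : ℝ)))
      Filter.atTop (nhds (HTilde θ)) ∧
    (θ = Real.log ((3 + Real.sqrt 5) / 2) → HTilde θ = 0) := by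
  have hθ0 : 0 < θ := fig8_threshold_pos.trans_le hθ
  have hcosh : 3 / 2 ≤ Real.cosh θ := by
    rw [← fig8_threshold, Real.cosh_le_cosh, abs_of_pos fig8_threshold_pos, abs_of_pos hθ0]
    exact hθ
  have hφdef : phiTilde θ = Real.arcosh (Real.cosh θ - 1 / 2) := rfl
  refine ⟨?_, fun heq => ?_⟩
  swap
  · have hφz : phiTilde θ = 0 := by
      rw [hφdef, heq, fig8_threshold, Real.arcosh_eq_zero_iff (by norm_num)]
      norm_num
    simp [HTilde, hφz]
  have hφ0 : 0 ≤ phiTilde θ := by rw [hφdef]; exact Real.arcosh_nonneg (by linarith)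
  have hcφ : Real.cosh (phiTilde θ) = Real.cosh θ - 1 / 2 := by
    rw [hφdef, Real.cosh_arcosh (by linarith)]
  have hφθ : phiTilde θ < θ := by
    have : Real.cosh (phiTilde θ) < Real.cosh θ := by linarith
    rwa [Real.cosh_lt_cosh, abs_of_nonneg hφ0, abs_of_pos hθ0] at this
  have hG : fig8G θ (phiTilde θ) = 0 := by
    rw [fig8G, hcφ, Real.log_eq_zero]
    right; left; ring
  change Filter.Tendsto _ _ (nhds (fig8F θ (phiTilde θ)))
  set φ := phiTilde θ with hφ
  have hh : Filter.Tendsto (fun N : ℕ => θ / (N : ℝ)) Filter.atTop (nhds 0) :=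
    tendsto_const_div_atTop_nhds_zero_nat θ
  -- The lattice point `(⌊φ / h⌋ + 1) h` lies in `(φ, φ + h]`, hence tends to `φ`.
  have hpt : Filter.Tendsto
      (fun N : ℕ => ((⌊φ / (θ / N)⌋₊ : ℝ) + 1) * (θ / (N : ℝ))) Filter.atTop (nhds φ) := by
    refine tendsto_of_tendsto_of_tendsto_of_le_of_le' (tendsto_const_nhds (x := φ))
      (by simpa using hh.const_add φ) ?_ ?_
    · filter_upwards [Filter.eventually_gt_atTop 0] with N hN
      have hpos : 0 < θ / (N : ℝ) := by positivity
      exact ((div_lt_iff₀ hpos).mp (Nat.lt_floor_add_one _)).le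
    · filter_upwards [Filter.eventually_gt_atTop 0] with N hN
      have hpos : 0 < θ / (N : ℝ) := by positivity
      have := (le_div_iff₀ hpos).mp (Nat.floor_le (by positivity : 0 ≤ φ / (θ / (N : ℝ))))
      linarith
  have hF0 : ContinuousAt (fig8F θ) 0 := (fig8F_hasDerivAt (by simpa using hθ0)).continuousAt
  have hFφ : ContinuousAt (fig8F θ) φ :=
    (fig8F_hasDerivAt (by rwa [abs_of_nonneg hφ0])).continuousAt
  have hlow := (hFφ.tendsto.comp hpt).sub (hF0.tendsto.comp hh)
  rw [fig8F_zero, sub_zero] at hlow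
  have hlogN : Filter.Tendsto (fun N : ℕ => Real.log (N : ℝ) / (N : ℝ)) Filter.atTop (nhds 0) :=
    Real.isLittleO_log_id_atTop.tendsto_div_nhds_zero.comp tendsto_natCast_atTop_atTop
  have hup : Filter.Tendsto (fun N : ℕ => fig8F θ φ + θ * (Real.log (N : ℝ) / (N : ℝ)))
      Filter.atTop (nhds (fig8F θ φ)) := by
    simpa using (hlogN.const_mul θ).const_add (fig8F θ φ)
  refine tendsto_of_tendsto_of_tendsto_of_le_of_le' hlow hup ?_ ?_
  · filter_upwards [Filter.eventually_gt_atTop 0, hpt.eventually_lt_const hφθ] with N hN hlt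
    exact fig8_lower hN hθ0 _ hlt
  · filter_upwards [Filter.eventually_gt_atTop 0] with N hN
    exact fig8_upper hN hθ0 hφ0 hφθ hG
end

section
/- (Hikami–Murakami.) Let θ₀ := log((3+√5)/2) = arccosh(3/2), so that e^{θ₀} is a zero of the Alexander polynomial of the figure-eight knot. Then the colored Jones polynomials of the figure-eight knot E grow polynomially of order N^{2/3} at q = e^{θ₀/N}: lim_{N→∞} J_N(E; e^{θ₀/N}) / N^{2/3} = Γ(1/3) / (3θ₀)^{2/3}, where Γ is the Gamma function. -/
/-!
By the product-to-sum formula the `j`-th factor of the Jones sum is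
`2 cosh θ - 2 cosh (jθ/N)`, and `2 cosh θ = 3` for `θ = log((3+√5)/2)`. Hence
`J_N = ∑_{k<N} ∏_{j≤k} (3 - 2 cosh (jθ/N))`, where each factor is `1 - (jθ/N)² + O((jθ/N)⁴)`,
so that the `k`-th term behaves like `exp (-θ² k³ / (3N²))`.

Put `M = N^{2/3}`, so `M³ = N²`. The quotient `J_N / M` is the integral over `(0, ∞)` of the step
function sending `x` to the term with index `⌊M x⌋` (`integral_floor_scale`). These step functions
converge pointwise to `exp (-θ² x³ / 3)` (`tendsto_term_floor`): this follows by squeezing from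
`exp (-u² - 4u⁴) ≤ 3 - 2 cosh u ≤ exp (-u²)`. The upper bound, together with
`t³ ≥ 3t - 2`, also provides the dominating function `C exp (-θ² x)` (`fig8Term_le_dominating`).
Dominated convergence and the Gamma integral
`∫₀^∞ exp (-θ² x³ / 3) dx = Γ(1/3) / (3θ)^{2/3}` finish the proof.
-/

open scoped Real BigOperators

open Filter Topology MeasureTheory

/-- The `k`-th summand `∏_{j=1}^{k} (3 - 2 cosh (jθ/N))` of the Jones sum at `2 cosh θ = 3`,
extended by zero to all indices `k ≥ N`. -/
noncomputable def fig8Term (θ : ℝ) (N k : ℕ) : ℝ :=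
  if k < N then ∏ j ∈ Finset.Icc 1 k, (3 - 2 * Real.cosh (j * θ / N)) else 0

/-! ### Elementary estimates for a single factor -/

lemma factor_le_exp {u : ℝ} (hu : 0 ≤ u) : 3 - 2 * Real.cosh u ≤ Real.exp (-u ^ 2) := by
  have h1 : Real.cosh u = 1 + 2 * Real.sinh (u / 2) ^ 2 := by
    have h := Real.cosh_two_mul (u / 2)
    rw [show 2 * (u / 2) = u by ring, Real.cosh_sq] at h
    linarith
  have h2 : u / 2 ≤ Real.sinh (u / 2) := Real.self_le_sinh_iff.2 (by positivity)
  have h3 : (u / 2) ^ 2 ≤ Real.sinh (u / 2) ^ 2 := pow_le_pow_left₀ (by positivity) h2 2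
  have h4 := Real.add_one_le_exp (-u ^ 2)
  nlinarith

lemma exp_le_factor {u : ℝ} (hu : u ^ 2 ≤ 1 / 4) :
    Real.exp (-u ^ 2 - 4 * u ^ 4) ≤ 3 - 2 * Real.cosh u := by
  set s := u ^ 2 / 2 with hs
  have hs0 : 0 ≤ s := by positivity
  have hs1 : s ≤ 1 / 8 := by linarith
  have h1 : Real.cosh u ≤ Real.exp s := Real.cosh_le_exp_half_sq u
  have h2 : Real.exp s ≤ 1 + s + s ^ 2 := by
    have := (abs_le.1 (Real.abs_exp_sub_one_sub_id_le (x := s)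
      (by rw [abs_le]; constructor <;> linarith))).2
    linarith
  have h3 : -u ^ 2 - 4 * u ^ 4 = -(2 * s + 16 * s ^ 2) := by rw [hs]; ring
  -- `exp (-w) ≤ 1 / (1 + w)`, and `(1 + w) (1 - 2s - 2s²) ≥ 1` for `w = 2s + 16s²`, `s ≤ 1/8`.
  have h4 : 1 ≤ (1 + (2 * s + 16 * s ^ 2)) * (1 - 2 * s - 2 * s ^ 2) := by
    nlinarith [mul_nonneg hs0 hs0, mul_nonneg (mul_nonneg hs0 hs0) (sub_nonneg.2 hs1),
      mul_nonneg (mul_nonneg (mul_nonneg hs0 hs0) hs0) (sub_nonneg.2 hs1)]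
  have h5 := Real.add_one_le_exp (2 * s + 16 * s ^ 2)
  rw [h3, Real.exp_neg, inv_le_iff_one_le_mul₀ (Real.exp_pos _)]
  have h6 : 0 ≤ 1 - 2 * s - 2 * s ^ 2 := by nlinarith
  calc (1 : ℝ) ≤ (1 + (2 * s + 16 * s ^ 2)) * (1 - 2 * s - 2 * s ^ 2) := h4
    _ ≤ Real.exp (2 * s + 16 * s ^ 2) * (1 - 2 * s - 2 * s ^ 2) := by gcongr; linarith
    _ ≤ Real.exp (2 * s + 16 * s ^ 2) * (3 - 2 * Real.cosh u) :=
        mul_le_mul_of_nonneg_left (by linarith) (Real.exp_pos _).le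
    _ = _ := by ring

lemma factor_nonneg {θ : ℝ} (hθ : 0 < θ) (hc : Real.cosh θ = 3 / 2) {j N : ℕ} (hj : j ≤ N) :
    0 ≤ 3 - 2 * Real.cosh (j * θ / N) := by
  have : Real.cosh (j * θ / N) ≤ Real.cosh θ := by
    rw [Real.cosh_le_cosh, abs_of_nonneg (by positivity), abs_of_pos hθ]
    apply div_le_of_le_mul₀ (by positivity) hθ.le
    rw [mul_comm]
    gcongr
  linarith

lemma fig8Jones_eq_sum {θ : ℝ} (hc : Real.cosh θ = 3 / 2) (N : ℕ) :
    fig8JonesReal N θ = ∑ k ∈ Finset.range N, fig8Term θ N k := by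
  unfold fig8JonesReal
  refine Finset.sum_congr rfl fun k hk => ?_
  have hkN := Finset.mem_range.1 hk
  rw [fig8Term, if_pos hkN]
  refine Finset.prod_congr rfl fun j _ => ?_
  have hN : (N : ℝ) ≠ 0 := by
    have : N ≠ 0 := by omega
    exact_mod_cast this
  rw [show (3 : ℝ) = 2 * Real.cosh θ by rw [hc]; ring, Real.cosh_eq, Real.cosh_eq]
  have e1 : ((N : ℝ) - j) * θ / (2 * N) = θ / 2 - j * θ / N / 2 := by field_simp
  have e2 : ((N : ℝ) + j) * θ / (2 * N) = θ / 2 + j * θ / N / 2 := by field_simp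
  rw [neg_div, neg_div, e1, e2]
  generalize j * θ / N = u
  simp only [sub_mul, mul_sub, ← Real.exp_add]
  ring_nf

/-! ### Two-sided bounds for the summands -/

lemma sum_sq_Icc (k : ℕ) :
    ∑ j ∈ Finset.Icc 1 k, (j : ℝ) ^ 2 = (2 * (k : ℝ) ^ 3 + 3 * (k : ℝ) ^ 2 + k) / 6 := by
  induction k with
  | zero => simp
  | succ n ih =>
    rw [Finset.sum_Icc_succ_top (by omega), ih]
    push_cast
    ring

lemma fig8Term_nonneg {θ : ℝ} (hθ : 0 < θ) (hc : Real.cosh θ = 3 / 2) (N k : ℕ) :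
    0 ≤ fig8Term θ N k := by
  unfold fig8Term
  split_ifs with h
  · exact Finset.prod_nonneg fun j hj =>
      factor_nonneg hθ hc ((Finset.mem_Icc.1 hj).2.trans h.le)
  · exact le_rfl

lemma fig8Term_le {θ : ℝ} (hθ : 0 < θ) (hc : Real.cosh θ = 3 / 2) (N k : ℕ) :
    fig8Term θ N k ≤
      Real.exp (-(θ ^ 2 * ((2 * (k : ℝ) ^ 3 + 3 * (k : ℝ) ^ 2 + k) / 6) / (N : ℝ) ^ 2)) := by
  unfold fig8Term
  split_ifs with h
  · calc ∏ j ∈ Finset.Icc 1 k, (3 - 2 * Real.cosh (j * θ / N))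
        ≤ ∏ j ∈ Finset.Icc 1 k, Real.exp (-(j * θ / N) ^ 2) :=
          Finset.prod_le_prod
            (fun j hj => factor_nonneg hθ hc ((Finset.mem_Icc.1 hj).2.trans h.le))
            (fun j _ => factor_le_exp (by positivity))
      _ = _ := by
          rw [← Real.exp_sum, ← sum_sq_Icc, Finset.mul_sum, Finset.sum_div,
            ← Finset.sum_neg_distrib]
          congr 1
          refine Finset.sum_congr rfl fun j _ => ?_
          ring
  · positivity

lemma le_fig8Term {θ : ℝ} (hθ : 0 < θ) {N k : ℕ} (hk : k < N)
    (hs : (k * θ / N) ^ 2 ≤ 1 / 4) :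
    Real.exp (-(θ ^ 2 * ((2 * (k : ℝ) ^ 3 + 3 * (k : ℝ) ^ 2 + k) / 6) / (N : ℝ) ^ 2)
      - 4 * θ ^ 4 * ((k : ℝ) ^ 5 / (N : ℝ) ^ 4)) ≤ fig8Term θ N k := by
  rw [fig8Term, if_pos hk]
  have hle : ∀ j ∈ Finset.Icc 1 k, (j * θ / N : ℝ) ≤ k * θ / N := fun j hj => by
    have : (j : ℝ) ≤ k := by exact_mod_cast (Finset.mem_Icc.1 hj).2
    gcongr
  calc _ ≤ Real.exp (∑ j ∈ Finset.Icc 1 k, (-(j * θ / N) ^ 2 - 4 * (j * θ / N) ^ 4)) := by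
        apply Real.exp_le_exp.2
        rw [Finset.sum_sub_distrib]
        have e1 : ∑ j ∈ Finset.Icc 1 k, (-(j * θ / N : ℝ) ^ 2) =
            -(θ ^ 2 * ((2 * (k : ℝ) ^ 3 + 3 * (k : ℝ) ^ 2 + k) / 6) / (N : ℝ) ^ 2) := by
          rw [← sum_sq_Icc, Finset.mul_sum, Finset.sum_div, ← Finset.sum_neg_distrib]
          refine Finset.sum_congr rfl fun j _ => ?_
          ring
        have e2 : ∑ j ∈ Finset.Icc 1 k, (4 * (j * θ / N : ℝ) ^ 4) ≤
            4 * θ ^ 4 * ((k : ℝ) ^ 5 / (N : ℝ) ^ 4) := by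
          calc ∑ j ∈ Finset.Icc 1 k, (4 * (j * θ / N : ℝ) ^ 4)
              ≤ ∑ j ∈ Finset.Icc 1 k, (4 * (k * θ / N : ℝ) ^ 4) :=
                Finset.sum_le_sum fun j hj => by
                  have := hle j hj
                  gcongr
            _ = _ := by
                rw [Finset.sum_const, Nat.card_Icc, nsmul_eq_mul]
                simp only [Nat.add_sub_cancel]
                ring
        linarith
    _ = ∏ j ∈ Finset.Icc 1 k, Real.exp (-(j * θ / N) ^ 2 - 4 * (j * θ / N) ^ 4) :=
        Real.exp_sum _ _
    _ ≤ _ := Finset.prod_le_prod (fun _ _ => (Real.exp_pos _).le) fun j hj =>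
        exp_le_factor ((pow_le_pow_left₀ (by positivity) (hle j hj) 2).trans hs)

/-! ### The sum as an integral of a rescaled step function -/

lemma integral_floor_Ioi (f : ℕ → ℝ) (N : ℕ) (hf : ∀ k, N ≤ k → f k = 0) :
    ∫ x in Set.Ioi (0 : ℝ), f ⌊x⌋₊ = ∑ k ∈ Finset.range N, f k := by
  have hstep : ∀ k : ℕ, Set.EqOn (fun x : ℝ => f ⌊x⌋₊) (fun _ => f k)
      (Set.Ioo (k : ℝ) ((k + 1 : ℕ) : ℝ)) := fun k x hx => by
    have : ⌊x⌋₊ = k := by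
      rw [Nat.floor_eq_iff ((Nat.cast_nonneg k).trans hx.1.le)]
      exact ⟨hx.1.le, by simpa using hx.2⟩
    simp [this]
  have hle : ∀ k : ℕ, (k : ℝ) ≤ ((k + 1 : ℕ) : ℝ) := fun k => by simp
  have h1 : ∫ x in Set.Ioi (0 : ℝ), f ⌊x⌋₊ = ∫ x in Set.Ioc (0 : ℝ) N, f ⌊x⌋₊ := by
    refine setIntegral_eq_of_subset_of_forall_sdiff_eq_zero measurableSet_Ioi
      (fun x hx => hx.1) fun x hx => hf _ ?_
    have : (N : ℝ) < x := by
      by_contra h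
      exact hx.2 ⟨hx.1, not_lt.1 h⟩
    exact Nat.le_floor this.le
  have h2 := intervalIntegral.sum_integral_adjacent_intervals (μ := volume)
    (f := fun x : ℝ => f ⌊x⌋₊) (a := fun k : ℕ => (k : ℝ)) (n := N) fun k _ =>
      (intervalIntegrable_const (c := f k)).congr_uIoo
        (by rw [Set.uIoo_of_le (hle k)]; exact (hstep k).symm)
  rw [h1, ← intervalIntegral.integral_of_le (Nat.cast_nonneg N), ← Nat.cast_zero, ← h2]
  refine Finset.sum_congr rfl fun k _ => ?_
  rw [intervalIntegral.integral_congr_Ioo_of_le (hle k) (hstep k)]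
  simp

lemma integral_floor_scale (f : ℕ → ℝ) (N : ℕ) (hf : ∀ k, N ≤ k → f k = 0) {M : ℝ}
    (hM : 0 < M) :
    ∫ x in Set.Ioi (0 : ℝ), f ⌊x * M⌋₊ = (∑ k ∈ Finset.range N, f k) / M := by
  rw [integral_comp_mul_right_Ioi (fun y => f ⌊y⌋₊) 0 hM, zero_mul, integral_floor_Ioi f N hf,
    smul_eq_mul]
  ring

/-! ### Pointwise limit and domination -/

lemma rpow_two_thirds_cube (N : ℕ) : ((N : ℝ) ^ ((2 : ℝ) / 3)) ^ 3 = (N : ℝ) ^ 2 := by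
  rw [← Real.rpow_natCast, ← Real.rpow_mul (Nat.cast_nonneg N), ← Real.rpow_natCast]
  norm_num

lemma tendsto_rpow_two_thirds :
    Tendsto (fun N : ℕ => (N : ℝ) ^ ((2 : ℝ) / 3)) atTop atTop :=
  (tendsto_rpow_atTop (by norm_num)).comp tendsto_natCast_atTop_atTop

lemma tendsto_term_floor {θ : ℝ} (hθ : 0 < θ) (hc : Real.cosh θ = 3 / 2) {x : ℝ} (hx : 0 ≤ x) :
    Tendsto (fun N : ℕ => fig8Term θ N ⌊x * (N : ℝ) ^ ((2 : ℝ) / 3)⌋₊) atTop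
      (𝓝 (Real.exp (-(θ ^ 2 / 3) * x ^ 3))) := by
  set M : ℕ → ℝ := fun N => (N : ℝ) ^ ((2 : ℝ) / 3) with hMdef
  set a : ℕ → ℝ := fun N => (⌊x * M N⌋₊ : ℝ) / M N with hadef
  have hM : Tendsto M atTop atTop := tendsto_rpow_two_thirds
  have ha : Tendsto a atTop (𝓝 x) := (tendsto_nat_floor_mul_div_atTop hx).comp hM
  have hi : Tendsto (fun N => (M N)⁻¹) atTop (𝓝 0) := tendsto_inv_atTop_zero.comp hM
  have hpos : ∀ᶠ N in atTop, 0 < M N := hM.eventually_gt_atTop 0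
  have hcube : ∀ N, M N ^ 3 = (N : ℝ) ^ 2 := rpow_two_thirds_cube
  have hk : ∀ N, 0 < M N → (⌊x * M N⌋₊ : ℝ) = a N * M N := fun N h => by
    rw [hadef]; field_simp
  have hmain : Tendsto (fun N => -(θ ^ 2 * ((2 * a N ^ 3 + 3 * a N ^ 2 * (M N)⁻¹
      + a N * (M N)⁻¹ ^ 2) / 6))) atTop (𝓝 (-(θ ^ 2 / 3) * x ^ 3)) := by
    have := ((((ha.pow 3).const_mul 2).add (((ha.pow 2).const_mul 3).mul hi)).add
      (ha.mul (hi.pow 2))).div_const 6 |>.const_mul (θ ^ 2) |>.neg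
    convert this using 2
    ring
  have herr : Tendsto (fun N => 4 * θ ^ 4 * (a N ^ 5 * (M N)⁻¹)) atTop (𝓝 0) := by
    simpa using ((ha.pow 5).mul hi).const_mul (4 * θ ^ 4)
  have hsmall : Tendsto (fun N => a N ^ 2 * θ ^ 2 * (M N)⁻¹) atTop (𝓝 0) := by
    simpa using ((ha.pow 2).mul_const (θ ^ 2)).mul hi
  -- With `k = ⌊x M⌋`, `k² / N² = (k / M)² / M` tends to zero, so `k < N` eventually.
  have hlt : Tendsto (fun N => a N ^ 2 * (M N)⁻¹) atTop (𝓝 0) := by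
    simpa using (ha.pow 2).mul hi
  have hmainEq : ∀ N, 0 < M N →
      -(θ ^ 2 * ((2 * (⌊x * M N⌋₊ : ℝ) ^ 3 + 3 * (⌊x * M N⌋₊ : ℝ) ^ 2 + ⌊x * M N⌋₊) / 6)
        / (N : ℝ) ^ 2) =
      -(θ ^ 2 * ((2 * a N ^ 3 + 3 * a N ^ 2 * (M N)⁻¹ + a N * (M N)⁻¹ ^ 2) / 6)) :=
    fun N h => by
      rw [← hcube N, hk N h]
      field_simp
  have hup : Tendsto (fun N => Real.exp (-(θ ^ 2 * ((2 * a N ^ 3 + 3 * a N ^ 2 * (M N)⁻¹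
      + a N * (M N)⁻¹ ^ 2) / 6)))) atTop (𝓝 (Real.exp (-(θ ^ 2 / 3) * x ^ 3))) :=
    (Real.continuous_exp.tendsto _).comp hmain
  have hlo : Tendsto (fun N => Real.exp (-(θ ^ 2 * ((2 * a N ^ 3 + 3 * a N ^ 2 * (M N)⁻¹
      + a N * (M N)⁻¹ ^ 2) / 6)) - 4 * θ ^ 4 * (a N ^ 5 * (M N)⁻¹))) atTop
      (𝓝 (Real.exp (-(θ ^ 2 / 3) * x ^ 3))) := by
    have := hmain.sub herr
    rw [sub_zero] at this
    exact (Real.continuous_exp.tendsto _).comp this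
  refine tendsto_of_tendsto_of_tendsto_of_le_of_le' hlo hup ?_ ?_
  · filter_upwards [hpos, hsmall.eventually_lt_const (show (0 : ℝ) < 1 / 4 by norm_num),
      hlt.eventually_lt_const one_pos] with N hN h1 h2
    have hN2 : (0 : ℝ) < (N : ℝ) ^ 2 := by rw [← hcube]; positivity
    have hkN : ⌊x * M N⌋₊ < N := by
      have : (⌊x * M N⌋₊ : ℝ) ^ 2 < (N : ℝ) ^ 2 := by
        rw [hk N hN, ← hcube]
        have e : (a N * M N) ^ 2 = a N ^ 2 * (M N)⁻¹ * M N ^ 3 := by field_simp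
        rw [e]
        have : 0 < M N ^ 3 := by positivity
        nlinarith
      exact_mod_cast lt_of_pow_lt_pow_left₀ 2 (Nat.cast_nonneg N) this
    have hs : ((⌊x * M N⌋₊ : ℝ) * θ / N) ^ 2 ≤ 1 / 4 := by
      rw [div_pow, ← hcube, hk N hN]
      refine le_trans (le_of_eq ?_) h1.le
      field_simp
    have h5 : (⌊x * M N⌋₊ : ℝ) ^ 5 / (N : ℝ) ^ 4 = a N ^ 5 * (M N)⁻¹ := by
      rw [show (N : ℝ) ^ 4 = ((N : ℝ) ^ 2) ^ 2 by ring, ← hcube, hk N hN]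
      field_simp
    have := le_fig8Term hθ hkN hs
    rwa [hmainEq N hN, h5] at this
  · filter_upwards [hpos] with N hN
    have := fig8Term_le hθ hc N ⌊x * M N⌋₊
    rwa [hmainEq N hN] at this

/-- The dominating function. With `t = ⌊x M⌋ / M ≥ x - 1` the summand is at most
`exp (-θ² t³ / 3)`, and `t³ ≥ 3t - 2 ≥ 3x - 5`. -/
lemma fig8Term_le_dominating {θ : ℝ} (hθ : 0 < θ) (hc : Real.cosh θ = 3 / 2) (N : ℕ) {x : ℝ} :
    fig8Term θ N ⌊x * (N : ℝ) ^ ((2 : ℝ) / 3)⌋₊ ≤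
      Real.exp (5 * θ ^ 2 / 3) * Real.exp (-θ ^ 2 * x) := by
  rcases Nat.eq_zero_or_pos N with rfl | hN
  · simp only [fig8Term, not_lt_zero, if_false]
    positivity
  set M : ℝ := (N : ℝ) ^ ((2 : ℝ) / 3) with hM
  have hN1 : (1 : ℝ) ≤ N := by exact_mod_cast hN
  have hM1 : 1 ≤ M := Real.one_le_rpow hN1 (by norm_num)
  have hM0 : 0 < M := by linarith
  have hcube : M ^ 3 = (N : ℝ) ^ 2 := rpow_two_thirds_cube N
  refine (fig8Term_le hθ hc N _).trans ?_
  rw [← Real.exp_add, ← hcube]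
  apply Real.exp_le_exp.2
  set k : ℝ := (⌊x * M⌋₊ : ℝ) with hk
  have hk0 : 0 ≤ k := Nat.cast_nonneg _
  have hfl : x * M < k + 1 := Nat.lt_floor_add_one _
  set t := k / M with ht
  have ht0 : 0 ≤ t := by positivity
  have hkt : k = t * M := by rw [ht]; field_simp
  have htx : x - 1 ≤ t := by
    rw [ht, le_div_iff₀ hM0]
    nlinarith
  have h1 : t ^ 3 / 3 ≤ ((2 * k ^ 3 + 3 * k ^ 2 + k) / 6) / M ^ 3 := by
    rw [le_div_iff₀ (by positivity)]
    have : t ^ 3 / 3 * M ^ 3 = k ^ 3 / 3 := by rw [hkt]; ring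
    rw [this]
    nlinarith [sq_nonneg k]
  have h2 : 3 * t - 2 ≤ t ^ 3 := by
    nlinarith [mul_nonneg (sq_nonneg (t - 1)) (by linarith : 0 ≤ t + 2)]
  have h3 : x - 5 / 3 ≤ ((2 * k ^ 3 + 3 * k ^ 2 + k) / 6) / M ^ 3 := by linarith
  have h4 := mul_le_mul_of_nonneg_left h3 (sq_nonneg θ)
  rw [mul_div_assoc]
  linarith

lemma integral_limit {θ : ℝ} (hθ : 0 < θ) :
    ∫ x in Set.Ioi (0 : ℝ), Real.exp (-(θ ^ 2 / 3) * x ^ 3) =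
      Real.Gamma (1 / 3) / (3 * θ) ^ ((2 : ℝ) / 3) := by
  have h := integral_exp_neg_mul_rpow (p := 3) (b := θ ^ 2 / 3) (by norm_num) (by positivity)
  have e : ∀ x : ℝ, x ^ (3 : ℝ) = x ^ 3 := fun x => by
    rw [← Real.rpow_natCast]; norm_num
  simp only [e] at h
  rw [h, Real.Gamma_add_one (by norm_num), neg_div, Real.rpow_neg (by positivity),
    Real.div_rpow (by positivity) (by norm_num), Real.mul_rpow (by norm_num) hθ.le,
    ← Real.rpow_natCast, ← Real.rpow_mul hθ.le]
  have h3 : (3 : ℝ) ^ ((2 : ℝ) / 3) * (3 : ℝ) ^ ((1 : ℝ) / 3) = 3 := by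
    rw [← Real.rpow_add (by norm_num)]
    norm_num
  have hp : (0 : ℝ) < 3 ^ ((2 : ℝ) / 3) := by positivity
  have hq : (0 : ℝ) < θ ^ ((2 : ℝ) / 3) := by positivity
  have h23 : ((2 : ℕ) : ℝ) * (1 / 3) = 2 / 3 := by norm_num
  rw [h23, inv_div]
  field_simp
  linear_combination h3

/-- (Hikami–Murakami.) At `θ₀ = log((3+√5)/2) = arccosh(3/2)`, a zero of the Alexander
polynomial, the colored Jones polynomials of the figure-eight knot grow like `N^{2/3}`:
`lim_{N→∞} J_N(E; e^{θ₀/N})/N^{2/3} = Γ(1/3)/(3θ₀)^{2/3}`. -/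
theorem fig8_polynomial_growth :
    Filter.Tendsto
      (fun N : ℕ =>
        fig8JonesReal N (Real.log ((3 + Real.sqrt 5) / 2)) / (N : ℝ) ^ ((2 : ℝ) / 3))
      Filter.atTop
      (nhds (Real.Gamma (1 / 3) /
        (3 * Real.log ((3 + Real.sqrt 5) / 2)) ^ ((2 : ℝ) / 3))) := by
  have h5 : Real.sqrt 5 ^ 2 = 5 := Real.sq_sqrt (by norm_num)
  have h50 : 0 ≤ Real.sqrt 5 := Real.sqrt_nonneg 5
  have hθ : 0 < Real.log ((3 + Real.sqrt 5) / 2) := Real.log_pos (by linarith)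
  have hc : Real.cosh (Real.log ((3 + Real.sqrt 5) / 2)) = 3 / 2 := by
    rw [Real.cosh_log (by positivity)]
    have : (3 + Real.sqrt 5) ≠ 0 := by positivity
    field_simp
    nlinarith
  generalize Real.log ((3 + Real.sqrt 5) / 2) = θ at hθ hc ⊢
  rw [← integral_limit hθ]
  have key : Tendsto (fun N : ℕ => ∫ x in Set.Ioi (0 : ℝ),
      fig8Term θ N ⌊x * (N : ℝ) ^ ((2 : ℝ) / 3)⌋₊) atTop
      (𝓝 (∫ x in Set.Ioi (0 : ℝ), Real.exp (-(θ ^ 2 / 3) * x ^ 3))) := by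
    refine tendsto_integral_of_dominated_convergence
      (fun x => Real.exp (5 * θ ^ 2 / 3) * Real.exp (-θ ^ 2 * x)) (fun N => ?_) ?_
      (fun N => ?_) ?_
    · refine Measurable.aestronglyMeasurable ?_
      exact (measurable_from_nat (f := fig8Term θ N)).comp
        (Nat.measurable_floor.comp (measurable_id.mul_const _))
    · exact (exp_neg_integrableOn_Ioi 0 (by positivity)).const_mul _
    · refine Eventually.of_forall fun x => ?_
      rw [Real.norm_of_nonneg (fig8Term_nonneg hθ hc _ _)]
      exact fig8Term_le_dominating hθ hc N
    · exact ae_restrict_of_forall_mem measurableSet_Ioi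
        fun x hx => tendsto_term_floor hθ hc (Set.mem_Ioi.1 hx).le
  refine key.congr' ?_
  filter_upwards [eventually_gt_atTop 0] with N hN
  have hN0 : (0 : ℝ) < N := by exact_mod_cast hN
  rw [fig8Jones_eq_sum hc, integral_floor_scale (fig8Term θ N) N
    (fun k hk => if_neg (not_lt.2 hk)) (Real.rpow_pos_of_pos hN0 _)]
end

section
/- (Hikami–Murakami, case of the trefoil.) Let θ₀ := 2πi/6 = πi/3, so that e^{θ₀} is a zero of the Alexander polynomial of the trefoil T = T(2,3). Then lim_{N→∞} J_N(T; e^{θ₀/N}) / N^{1/2} = e^{−πi/4} · √(3/2). (This is the instance a=2, b=3 of the asymptotics J_N(T(a,b); exp(2πi/(abN))) ∼ e^{−πi/4}·(sin(π/a)sin(π/b)/(√2 sin(π/(ab))))·N^{1/2}, since sin(π/2)sin(π/3)/(√2 sin(π/6)) = √(3/2).) -/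
/-!
Write `θ = πi/3` and `F y = e^{-θ} (1 - e^{(y-1)θ})`. The `k`-th summand of the Habiro–Lê formula is
`∏_{j=1}^{k} F (j/N)`. Since `e^θ` is a zero of the Alexander polynomial `t - 1 + t⁻¹`, it follows
that `F 0 = 1`, so for `k ≈ t √N` this product tends to `exp (d t² / 2)`,
where `d` is the derivative of `F` at `0` (`tendsto_prod_factor`).
Moreover `‖F y‖ = 2 sin (π/6 - πy/6) ≤ e^{-y/2}` on `[0, 1]` (`norm_factor_le`), so the summands are
dominated by a Gaussian. Writing the sum divided by `√N` as the integral of a step function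
(`sum_eq_integral_floor`), dominated convergence gives
`(1/√N) ∑ₖ → ∫₀^∞ exp (d t²/2) dt = √(3/2) e^{πi/12}`, and the prefactor
`e^{(1-N)θ/N} → e^{-πi/3}` turns the phase into `e^{-πi/4}`.
-/

open scoped Real BigOperators

/-- The `N`-colored Jones polynomial of the trefoil knot evaluated at `q = e^{θ/N}`
(Habiro–Lê formula). -/
noncomputable def trefoilJones (N : ℕ) (θ : ℂ) : ℂ :=
  Complex.exp ((1 - (N : ℂ)) * θ / N) *
    ∑ k ∈ Finset.range N, Complex.exp (-(k : ℂ) * θ) *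
      ∏ j ∈ Finset.Icc 1 k, (1 - Complex.exp (((j : ℂ) - N) * θ / N))

/-! ### The factors of the summands -/

/-- The factor `F y = e^{-θ} (1 - e^{(y-1)θ})` at `θ = πi/3`; the `k`-th summand of the Jones
polynomial is the product of the `F (j/N)` over `1 ≤ j ≤ k`. -/
noncomputable def factor (y : ℝ) : ℂ :=
  Complex.exp (-(π * Complex.I / 3)) * (1 - Complex.exp (((y : ℂ) - 1) * (π * Complex.I / 3)))

lemma exp_neg_third : Complex.exp (-(π * Complex.I / 3)) = 1 / 2 - (√3 / 2 : ℝ) * Complex.I := by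
  rw [show -(π * Complex.I / 3) = ((-(π / 3) : ℝ) : ℂ) * Complex.I by push_cast; ring,
    Complex.exp_mul_I, ← Complex.ofReal_cos, ← Complex.ofReal_sin, Real.cos_neg, Real.sin_neg,
    Real.cos_pi_div_three, Real.sin_pi_div_three]
  push_cast
  ring

lemma sqrt_three_sq : ((√3 : ℝ) : ℂ) ^ 2 = 3 := by
  rw [← Complex.ofReal_pow, Real.sq_sqrt (by norm_num)]
  norm_num

lemma factor_zero : factor 0 = 1 := by
  have h : ((((0 : ℝ) : ℂ)) - 1) * (π * Complex.I / 3) = -(π * Complex.I / 3) := by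
    push_cast; ring
  rw [factor, h, exp_neg_third]
  push_cast
  linear_combination (-1 / 4 * Complex.I ^ 2) * sqrt_three_sq - 3 / 4 * Complex.I_sq

/-- The Gaussian exponent `b = (π/6) e^{-πi/6}`; it is `-1/2` times the derivative of `F` at `0`. -/
noncomputable def gaussExp : ℂ := π / 6 * (√3 / 2 - Complex.I / 2)

lemma hasDerivAt_factor : HasDerivAt factor (-2 * gaussExp) 0 := by
  have h1 : HasDerivAt (fun y : ℝ => (((y : ℂ) - 1) * (π * Complex.I / 3)))
      (1 * (π * Complex.I / 3)) 0 :=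
    ((Complex.ofRealCLM.hasDerivAt (x := (0 : ℝ))).sub_const 1).mul_const _
  have h2 := (h1.cexp.const_sub 1).const_mul (Complex.exp (-(π * Complex.I / 3)))
  refine h2.congr_deriv ?_
  have h : ((((0 : ℝ) : ℂ)) - 1) * (π * Complex.I / 3) = -(π * Complex.I / 3) := by
    push_cast; ring
  rw [h, exp_neg_third, gaussExp]
  push_cast
  linear_combination (-π / 12 * Complex.I ^ 3 : ℂ) * sqrt_three_sq
    + (-π / 4 * Complex.I + π * √3 / 6) * Complex.I_sq

lemma norm_factor_le {y : ℝ} (h0 : 0 ≤ y) (h1 : y ≤ 1) : ‖factor y‖ ≤ Real.exp (-y / 2) := by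
  have hpi := Real.pi_pos
  have e1 : ‖Complex.exp (-(π * Complex.I / 3))‖ = 1 := by
    rw [show -(π * Complex.I / 3) = ((-(π / 3) : ℝ) : ℂ) * Complex.I by push_cast; ring,
      Complex.norm_exp_ofReal_mul_I]
  rw [factor, norm_mul, e1, one_mul, norm_sub_rev,
    show ((y : ℂ) - 1) * (π * Complex.I / 3) = Complex.I * (((y - 1) * (π / 3) : ℝ) : ℂ) by
      push_cast; ring,
    Complex.norm_exp_I_mul_ofReal_sub_one]
  have e2 : 2 * Real.sin ((y - 1) * (π / 3) / 2)
      = √3 * Real.sin (π / 6 * y) - Real.cos (π / 6 * y) := by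
    rw [show (y - 1) * (π / 3) / 2 = π / 6 * y - π / 6 by ring, Real.sin_sub,
      Real.cos_pi_div_six, Real.sin_pi_div_six]
    ring
  have e3 : Real.sin ((y - 1) * (π / 3) / 2) ≤ 0 := by
    apply Real.sin_nonpos_of_nonpos_of_neg_pi_le <;> nlinarith
  have e4 : 2 / π * (π / 6 * y) ≤ Real.sin (π / 6 * y) :=
    Real.mul_le_sin (by positivity) (by nlinarith)
  have e5 : 2 / π * (π / 6 * y) = y / 3 := by field_simp; ring
  have e6 : (3 / 2 : ℝ) ≤ √3 := Real.le_sqrt_of_sq_le (by norm_num)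
  have e7 := Real.cos_le_one (π / 6 * y)
  have e8 := Real.add_one_le_exp (-y / 2)
  rw [Real.norm_of_nonpos (by linarith), e2]
  rw [e5] at e4
  nlinarith

/-! ### Limit of the products -/

lemma sum_Icc_div (k : ℕ) (N : ℝ) :
    ∑ j ∈ Finset.Icc 1 k, (j : ℝ) / N = k * (k + 1) / (2 * N) := by
  induction k with
  | zero => simp
  | succ n ih =>
    rw [Finset.sum_Icc_succ_top (by omega), ih]
    push_cast
    rcases eq_or_ne N 0 with rfl | h
    · simp
    · field_simp
      ring

/-- Only the first-order behaviour of `G` at `0` matters for the limit, because the arguments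
`j/N ≤ k/N` tend to `0` while `∑ j/N ≈ t²/2` stays bounded. -/
lemma tendsto_sum_of_hasDerivAt {G : ℝ → ℂ} {d : ℂ} (hG : HasDerivAt G d 0) (hG0 : G 0 = 0)
    {k : ℕ → ℕ} {t : ℝ} (hS : Filter.Tendsto
      (fun N : ℕ => ∑ j ∈ Finset.Icc 1 (k N), (j : ℝ) / N) Filter.atTop (nhds (t ^ 2 / 2)))
    (hk : Filter.Tendsto (fun N : ℕ => (k N : ℝ) / N) Filter.atTop (nhds 0)) :
    Filter.Tendsto (fun N : ℕ => ∑ j ∈ Finset.Icc 1 (k N), G ((j : ℝ) / N)) Filter.atTop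
      (nhds (d * (t ^ 2 / 2 : ℝ))) := by
  have hmain : Filter.Tendsto
      (fun N : ℕ => d * ((∑ j ∈ Finset.Icc 1 (k N), (j : ℝ) / N : ℝ) : ℂ)) Filter.atTop
      (nhds (d * (t ^ 2 / 2 : ℝ))) :=
    ((Complex.continuous_ofReal.tendsto _).comp hS).const_mul d
  have herr : Filter.Tendsto (fun N : ℕ => ∑ j ∈ Finset.Icc 1 (k N), G ((j : ℝ) / N)
      - d * ((∑ j ∈ Finset.Icc 1 (k N), (j : ℝ) / N : ℝ) : ℂ)) Filter.atTop (nhds 0) := by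
    rw [Metric.tendsto_nhds]
    intro ε hε
    set δ := ε / (t ^ 2 / 2 + 1) with hδ
    have hpos : 0 < t ^ 2 / 2 + 1 := by positivity
    have hδ0 : 0 < δ := by positivity
    have hlo := (hasDerivAt_iff_isLittleO.1 hG).def hδ0
    obtain ⟨r, hr, hball⟩ := Metric.eventually_nhds_iff.1 hlo
    filter_upwards [hk.eventually_lt_const hr, hS.eventually_lt_const (lt_add_one _)]
      with N h1 h2
    rw [dist_zero_right, Complex.ofReal_sum, Finset.mul_sum, ← Finset.sum_sub_distrib]
    calc _ ≤ ∑ j ∈ Finset.Icc 1 (k N), δ * ((j : ℝ) / N) := by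
          refine norm_sum_le_of_le _ fun j hj => ?_
          have hjk : (j : ℝ) ≤ k N := by exact_mod_cast (Finset.mem_Icc.1 hj).2
          have hj0 : 0 ≤ (j : ℝ) / N := by positivity
          have := @hball ((j : ℝ) / N) (by
            rw [dist_zero_right, Real.norm_of_nonneg hj0]
            exact lt_of_le_of_lt (by gcongr) h1)
          rw [hG0, sub_zero, sub_zero, Real.norm_of_nonneg hj0, Complex.real_smul,
            mul_comm] at this
          exact this
      _ = δ * ∑ j ∈ Finset.Icc 1 (k N), (j : ℝ) / N := by rw [Finset.mul_sum]
      _ < δ * (t ^ 2 / 2 + 1) := by gcongr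
      _ = ε := by rw [hδ]; field_simp
  simpa using herr.add hmain

lemma tendsto_prod_factor {k : ℕ → ℕ} {t : ℝ}
    (ht : Filter.Tendsto (fun N : ℕ => (k N : ℝ) / √N) Filter.atTop (nhds t)) :
    Filter.Tendsto (fun N : ℕ => ∏ j ∈ Finset.Icc 1 (k N), factor ((j : ℝ) / N)) Filter.atTop
      (nhds (Complex.exp (-gaussExp * t ^ 2))) := by
  have hinv : Filter.Tendsto (fun N : ℕ => (√(N : ℝ))⁻¹) Filter.atTop (nhds 0) :=
    tendsto_inv_atTop_zero.comp (Real.tendsto_sqrt_atTop.comp tendsto_natCast_atTop_atTop)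
  have hk : Filter.Tendsto (fun N : ℕ => (k N : ℝ) / N) Filter.atTop (nhds 0) := by
    have := ht.mul hinv
    rw [mul_zero] at this
    refine this.congr fun N => ?_
    rw [← div_eq_mul_inv, div_div, Real.mul_self_sqrt (by positivity)]
  have hS : Filter.Tendsto (fun N : ℕ => ∑ j ∈ Finset.Icc 1 (k N), (j : ℝ) / N)
      Filter.atTop (nhds (t ^ 2 / 2)) := by
    have := ((ht.mul ht).add hk).div_const 2
    rw [add_zero, ← sq] at this
    refine this.congr fun N => ?_
    rw [sum_Icc_div, div_mul_div_comm, Real.mul_self_sqrt (by positivity), ← add_div, div_div]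
    ring
  have hslit : factor 0 ∈ Complex.slitPlane := by rw [factor_zero]; exact Complex.one_mem_slitPlane
  have hG : HasDerivAt (fun y => Complex.log (factor y)) (-2 * gaussExp) 0 := by
    have := hasDerivAt_factor.clog_real hslit
    rwa [factor_zero, div_one] at this
  have hsum := tendsto_sum_of_hasDerivAt hG (by simp [factor_zero]) hS hk
  have hexp := (Complex.continuous_exp.tendsto _).comp hsum
  rw [show -2 * gaussExp * ((t ^ 2 / 2 : ℝ) : ℂ) = -gaussExp * t ^ 2 by push_cast; ring] at hexp
  refine hexp.congr' ?_
  have hne : ∀ᶠ y in nhds (0 : ℝ), factor y ≠ 0 :=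
    hasDerivAt_factor.continuousAt.eventually_ne (by rw [factor_zero]; exact one_ne_zero)
  obtain ⟨r, hr, hball⟩ := Metric.eventually_nhds_iff.1 hne
  filter_upwards [hk.eventually_lt_const hr] with N h1
  rw [Function.comp_apply, Complex.exp_sum]
  refine Finset.prod_congr rfl fun j hj => Complex.exp_log (hball ?_)
  have hjk : (j : ℝ) ≤ k N := by exact_mod_cast (Finset.mem_Icc.1 hj).2
  rw [dist_zero_right, Real.norm_of_nonneg (by positivity)]
  exact lt_of_le_of_lt (by gcongr) h1

/-! ### The summands and their Gaussian bound -/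

/-- The `k`-th summand, extended by `0` to all `k`. -/
noncomputable def summand (N k : ℕ) : ℂ :=
  if k < N then ∏ j ∈ Finset.Icc 1 k, factor ((j : ℝ) / N) else 0

lemma trefoilJones_eq (N : ℕ) : trefoilJones N (π * Complex.I / 3) =
    Complex.exp ((1 - (N : ℂ)) * (π * Complex.I / 3) / N) *
      ∑ k ∈ Finset.range N, summand N k := by
  rw [trefoilJones]
  congr 1
  refine Finset.sum_congr rfl fun k hk => ?_
  have hkN := Finset.mem_range.1 hk
  have hN : (N : ℂ) ≠ 0 := by exact_mod_cast (by omega : N ≠ 0)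
  rw [summand, if_pos hkN]
  simp only [factor]
  rw [Finset.prod_mul_distrib, Finset.prod_const, Nat.card_Icc, Nat.add_sub_cancel,
    ← Complex.exp_nat_mul]
  congr 1
  · congr 1; ring
  · refine Finset.prod_congr rfl fun j _ => ?_
    congr 2
    push_cast
    field_simp

lemma norm_summand_le (N k : ℕ) :
    ‖summand N k‖ ≤ Real.exp (-((k * (k + 1) : ℝ) / (4 * N))) := by
  rw [summand]
  split_ifs with h
  · have hN : (0 : ℝ) < N := by exact_mod_cast (by omega : 0 < N)
    rw [norm_prod]
    calc _ ≤ ∏ j ∈ Finset.Icc 1 k, Real.exp (-((j : ℝ) / N) / 2) := by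
          refine Finset.prod_le_prod (fun _ _ => norm_nonneg _) fun j hj => ?_
          have hj' : (j : ℝ) ≤ N := by exact_mod_cast (Finset.mem_Icc.1 hj).2.trans h.le
          exact norm_factor_le (by positivity) ((div_le_one hN).2 hj')
      _ = _ := by
          rw [← Real.exp_sum, ← Finset.sum_div, Finset.sum_neg_distrib, sum_Icc_div]
          congr 1
          field_simp
          ring
  · simpa using (Real.exp_pos _).le

lemma norm_summand_floor_le {N : ℕ} (hN : 0 < N) {t : ℝ} (ht : 0 < t) :
    ‖summand N ⌊√N * t⌋₊‖ ≤ Real.exp (1 / 8) * Real.exp (-(1 / 8) * t ^ 2) := by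
  refine (norm_summand_le _ _).trans ?_
  rw [← Real.exp_add]
  refine Real.exp_le_exp.2 ?_
  have hN1 : (1 : ℝ) ≤ N := by exact_mod_cast hN
  have hs1 : 1 ≤ √(N : ℝ) := Real.one_le_sqrt.2 hN1
  have hsq : √(N : ℝ) ^ 2 = N := Real.sq_sqrt (by positivity)
  have h1 := Nat.lt_floor_add_one (√N * t)
  set m : ℝ := (⌊√N * t⌋₊ : ℝ) with hm
  have hm0 : 0 ≤ m := by positivity
  rw [← hsq]
  set s := √(N : ℝ)
  have h2 : s ^ 2 * t ^ 2 - s ^ 2 * t ≤ m * (m + 1) := by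
    have : s ^ 2 * t ^ 2 - s * t ≤ m * (m + 1) := by
      rcases le_total (s * t) 1 with h | h
      · have : 0 ≤ s * t := by positivity
        nlinarith [mul_nonneg hm0 hm0]
      · nlinarith
    nlinarith [mul_nonneg (mul_nonneg (by positivity : 0 ≤ s) ht.le) (sub_nonneg.2 hs1)]
  have h3 : (t ^ 2 - t) / 4 ≤ m * (m + 1) / (4 * s ^ 2) := by
    rw [div_le_div_iff₀ (by norm_num) (by positivity)]
    nlinarith
  nlinarith [sq_nonneg (t - 1)]

/-! ### The sum as an integral -/

lemma sum_eq_integral_floor (N : ℕ) :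
    ∑ k ∈ Finset.range N, summand N k = ∫ s in Set.Ioi (0 : ℝ), summand N ⌊s⌋₊ := by
  have hpiece : ∀ k : ℕ, Set.EqOn (fun s : ℝ => summand N ⌊s⌋₊) (fun _ => summand N k)
      (Set.Ioo (k : ℝ) ((k + 1 : ℕ) : ℝ)) := by
    intro k s hs
    have : ⌊s⌋₊ = k := by
      rw [Nat.floor_eq_iff ((Nat.cast_nonneg k).trans hs.1.le)]
      exact ⟨hs.1.le, by simpa using hs.2⟩
    simp only [this]
  have hval : ∀ k : ℕ, ∫ s in (k : ℝ)..((k + 1 : ℕ) : ℝ), summand N ⌊s⌋₊ = summand N k := by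
    intro k
    rw [intervalIntegral.integral_of_le (by simp), MeasureTheory.integral_Ioc_eq_integral_Ioo,
      MeasureTheory.setIntegral_congr_fun measurableSet_Ioo (hpiece k)]
    simp
  have hint : ∀ k : ℕ, IntervalIntegrable (fun s : ℝ => summand N ⌊s⌋₊) MeasureTheory.volume
      (k : ℝ) ((k + 1 : ℕ) : ℝ) := by
    intro k
    rw [intervalIntegrable_iff_integrableOn_Ioo_of_le (by simp),
      MeasureTheory.integrableOn_congr_fun (hpiece k) measurableSet_Ioo]
    simp
  have hadj := intervalIntegral.sum_integral_adjacent_intervals (a := fun k : ℕ => (k : ℝ)) (n := N)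
    (f := fun s : ℝ => summand N ⌊s⌋₊) (μ := MeasureTheory.volume) fun k _ => hint k
  simp only [hval] at hadj
  rw [hadj, Nat.cast_zero, intervalIntegral.integral_of_le (by positivity)]
  refine (MeasureTheory.setIntegral_eq_of_subset_of_forall_sdiff_eq_zero measurableSet_Ioi
    Set.Ioc_subset_Ioi_self ?_).symm
  rintro s ⟨hs, hs'⟩
  have hle : (N : ℝ) ≤ s := by
    by_contra! h
    exact hs' ⟨hs, h.le⟩
  rw [summand, if_neg (not_lt.2 (Nat.le_floor hle))]

lemma gaussExp_re : 0 < gaussExp.re := by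
  have : gaussExp = ((π / 6 * (√3 / 2) : ℝ) : ℂ) + ((-(π / 12) : ℝ) : ℂ) * Complex.I := by
    rw [gaussExp]; push_cast; ring
  rw [this, Complex.add_re, Complex.re_ofReal_mul, Complex.I_re, mul_zero, add_zero,
    Complex.ofReal_re]
  positivity

lemma tendsto_sum_summand :
    Filter.Tendsto (fun N : ℕ => (∑ k ∈ Finset.range N, summand N k) / (√(N : ℝ) : ℂ))
      Filter.atTop (nhds (∫ t in Set.Ioi (0 : ℝ), Complex.exp (-gaussExp * t ^ 2))) := by
  have hlim : Filter.Tendsto (fun N : ℕ => ∫ t in Set.Ioi (0 : ℝ), summand N ⌊√N * t⌋₊)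
      Filter.atTop (nhds (∫ t in Set.Ioi (0 : ℝ), Complex.exp (-gaussExp * t ^ 2))) := by
    refine MeasureTheory.tendsto_integral_filter_of_dominated_convergence
      (fun t => Real.exp (1 / 8) * Real.exp (-(1 / 8) * t ^ 2)) ?_ ?_ ?_ ?_
    · refine Filter.Eventually.of_forall fun N => ?_
      exact ((measurable_from_nat (f := summand N)).comp
        (Nat.measurable_floor.comp (measurable_const_mul _))).aestronglyMeasurable
    · filter_upwards [Filter.eventually_gt_atTop 0] with N hN
      filter_upwards [MeasureTheory.ae_restrict_mem measurableSet_Ioi] with t ht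
      exact norm_summand_floor_le hN ht
    · exact ((integrable_exp_neg_mul_sq (by norm_num)).const_mul _).integrableOn
    · filter_upwards [MeasureTheory.ae_restrict_mem measurableSet_Ioi] with t ht
      have hsqrt : Filter.Tendsto (fun N : ℕ => √(N : ℝ)) Filter.atTop Filter.atTop :=
        Real.tendsto_sqrt_atTop.comp tendsto_natCast_atTop_atTop
      have hfl : Filter.Tendsto (fun N : ℕ => (⌊√N * t⌋₊ : ℝ) / √N) Filter.atTop (nhds t) := by
        refine ((tendsto_nat_floor_mul_div_atTop (le_of_lt ht)).comp hsqrt).congr fun N => ?_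
        simp [mul_comm]
      refine (tendsto_prod_factor hfl).congr' ?_
      -- the truncation `k < N` is eventually vacuous, since `k ≤ t √N < N`
      filter_upwards [hsqrt.eventually_gt_atTop t, hsqrt.eventually_gt_atTop 0] with N h1 h0
      have hk : ⌊√N * t⌋₊ < N := by
        rw [Nat.floor_lt (mul_nonneg h0.le (le_of_lt ht))]
        calc √(N : ℝ) * t < √N * √N := by gcongr
          _ = N := Real.mul_self_sqrt (by positivity)
      rw [summand, if_pos hk]
  refine hlim.congr' ?_
  filter_upwards [Filter.eventually_gt_atTop 0] with N hN
  have h0 : 0 < √(N : ℝ) := Real.sqrt_pos.2 (by exact_mod_cast hN)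
  rw [MeasureTheory.integral_comp_mul_left_Ioi (fun s => summand N ⌊s⌋₊) 0 h0, mul_zero,
    sum_eq_integral_floor, Complex.real_smul, Complex.ofReal_inv, div_eq_inv_mul]

/-! ### Value of the Gaussian integral and the limit -/

lemma integral_gauss : ∫ t in Set.Ioi (0 : ℝ), Complex.exp (-gaussExp * t ^ 2)
    = √(3 / 2) * Complex.exp (π * Complex.I / 12) := by
  have hpi : (π : ℂ) ≠ 0 := by exact_mod_cast Real.pi_ne_zero
  rw [integral_gaussian_complex_Ioi gaussExp_re]
  have hz : (π : ℂ) / gaussExp = (√6 * Complex.exp (π * Complex.I / 12)) ^ 2 := by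
    have hg : gaussExp ≠ 0 := fun h => by simpa [h] using gaussExp_re
    rw [div_eq_iff hg, mul_pow, ← Complex.ofReal_pow, Real.sq_sqrt (by norm_num),
      ← Complex.exp_nat_mul,
      show ((2 : ℕ) : ℂ) * (π * Complex.I / 12) = ((π / 6 : ℝ) : ℂ) * Complex.I by
        push_cast; ring,
      Complex.exp_mul_I, ← Complex.ofReal_cos, ← Complex.ofReal_sin, Real.cos_pi_div_six,
      Real.sin_pi_div_six, gaussExp]
    push_cast
    linear_combination (-π / 4 : ℂ) * sqrt_three_sq + (π / 4 : ℂ) * Complex.I_sq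
  have harg : (√6 * Complex.exp (π * Complex.I / 12) : ℂ).arg = π / 12 := by
    rw [show (π * Complex.I / 12 : ℂ) = ((π / 12 : ℝ) : ℂ) * Complex.I by push_cast; ring,
      Complex.exp_mul_I, Complex.arg_mul_cos_add_sin_mul_I (by positivity)]
    constructor <;> linarith [Real.pi_pos]
  have hsq : √6 = 2 * √(3 / 2) := by
    rw [show (6 : ℝ) = 2 ^ 2 * (3 / 2) by norm_num, Real.sqrt_mul (by norm_num),
      Real.sqrt_sq (by norm_num)]
  -- the principal square root is the expected one because the argument `π/12` lies in `(-π/2, π/2]`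
  rw [hz, one_div, show (2 : ℂ)⁻¹ = ((2 : ℕ) : ℂ)⁻¹ by norm_num,
    Complex.pow_cpow_nat_inv two_ne_zero]
  · rw [hsq]; push_cast; ring
  · rw [harg]; push_cast; linarith [Real.pi_pos]
  · rw [harg]; push_cast; linarith [Real.pi_pos]

/-- (Hikami–Murakami, case of the trefoil.) At `θ₀ = πi/3 = 2πi/6`, `e^{θ₀}` is a zero of
the Alexander polynomial of the trefoil and
`lim_{N→∞} J_N(T; e^{θ₀/N})/N^{1/2} = e^{−πi/4}·√(3/2)`. -/
theorem trefoil_polynomial_growth :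
    Filter.Tendsto
      (fun N : ℕ =>
        trefoilJones N (Real.pi * Complex.I / 3) / (Real.sqrt (N : ℝ) : ℂ))
      Filter.atTop
      (nhds (Complex.exp (-(Real.pi * Complex.I) / 4) *
        (Real.sqrt (3 / 2) : ℂ))) := by
  have hpre : Filter.Tendsto
      (fun N : ℕ => Complex.exp ((1 - (N : ℂ)) * (π * Complex.I / 3) / N)) Filter.atTop
      (nhds (Complex.exp (-(π * Complex.I / 3)))) := by
    have hinv : Filter.Tendsto (fun N : ℕ => ((N : ℂ))⁻¹) Filter.atTop (nhds 0) :=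
      tendsto_inv_atTop_nhds_zero_nat
    have h := (hinv.sub_const 1).mul_const (π * Complex.I / 3)
    rw [zero_sub, neg_one_mul] at h
    refine ((Complex.continuous_exp.tendsto _).comp h).congr' ?_
    filter_upwards [Filter.eventually_gt_atTop 0] with N hN
    have hN' : (N : ℂ) ≠ 0 := by exact_mod_cast hN.ne'
    rw [Function.comp_apply]
    congr 1
    field_simp
  have h := hpre.mul tendsto_sum_summand
  have hval : Complex.exp (-(π * Complex.I / 3)) * (√(3 / 2) * Complex.exp (π * Complex.I / 12))
      = Complex.exp (-(π * Complex.I) / 4) * √(3 / 2) := by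
    rw [mul_left_comm, ← Complex.exp_add, mul_comm]
    congr 2
    ring
  rw [integral_gauss, hval] at h
  refine h.congr fun N => ?_
  rw [trefoilJones_eq]
  exact (mul_div_assoc _ _ _).symm
end

section
/- (Riley-type normal form for non-abelian SL(2,ℂ) representations of the figure-eight knot group.) Let m, d, s ∈ ℂ with m ≠ 0 and s² = m, and let X = [[s,1],[0,s⁻¹]], Y = [[s,0],[−d,s⁻¹]] ∈ SL(2,ℂ), with ω := X·Y⁻¹·X⁻¹·Y. Then the relation of the figure-eight knot group presentation ⟨x,y | ωx = yω⟩ is satisfied, i.e. ω·X = Y·ω as matrices, if and only if d² + (3 − m − m⁻¹)·d + (3 − m − m⁻¹) = 0. -/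
open Matrix

/-!
Write `P = d² + (3 - m - m⁻¹)d + (3 - m - m⁻¹)`. The two halves of the word `ω` are
`X Y⁻¹ = [[1+d, s], [s⁻¹d, 1]]` and `X⁻¹ Y = [[1+d, -s⁻¹], [-sd, 1]]`, so that `ω = [[a, b], [-d b, e]]`
with `a = (1+d)² - s²d`, `b = s - s⁻¹(1+d)` and `e = 1 - s⁻²d`. The shape of the lower left entry makes
the diagonal of `ωX - Yω` vanish and gives `ωX - Yω = [[0, P], [d P, 0]]`, which is zero iff `P = 0`.
-/

/-- (Riley-type normal form for non-abelian `SL(2,ℂ)` representations of the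
figure-eight knot group.) With `X = [[s,1],[0,s⁻¹]]`, `Y = [[s,0],[−d,s⁻¹]]`, `s² = m`,
and `ω = X Y⁻¹ X⁻¹ Y`, the relation `ω X = Y ω` of the presentation `⟨x,y ∣ ωx = yω⟩`
holds iff `d² + (3 − m − m⁻¹)d + (3 − m − m⁻¹) = 0`. -/
theorem fig8_Riley_representation (m d s : ℂ) (hm : m ≠ 0) (hs : s ^ 2 = m)
    (X Y ω : Matrix (Fin 2) (Fin 2) ℂ)
    (hX : X = !![s, 1; 0, s⁻¹]) (hY : Y = !![s, 0; -d, s⁻¹])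
    (hω : ω = X * Y⁻¹ * X⁻¹ * Y) :
    ω * X = Y * ω ↔ d ^ 2 + (3 - m - m⁻¹) * d + (3 - m - m⁻¹) = 0 := by
  have hs0 : s ≠ 0 := by
    rintro rfl
    exact hm (by simpa using hs.symm)
  have hst : s * s⁻¹ = 1 := mul_inv_cancel₀ hs0
  have hXi : X⁻¹ = !![s⁻¹, -1; 0, s] := by
    apply Matrix.inv_eq_right_inv
    rw [hX]
    ext i j
    fin_cases i <;> fin_cases j <;> simp [hs0]
  have hYi : Y⁻¹ = !![s⁻¹, 0; d, s] := by
    apply Matrix.inv_eq_right_inv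
    rw [hY]
    ext i j
    fin_cases i <;> fin_cases j <;> simp [hs0, mul_comm]
  have hmi : m⁻¹ = s⁻¹ ^ 2 := by rw [← hs, inv_pow]
  have key : ω * X - Y * ω =
      (d ^ 2 + (3 - m - m⁻¹) * d + (3 - m - m⁻¹)) • !![0, 1; d, 0] := by
    rw [hω, hXi, hYi, hX, hY, hmi, ← hs]
    -- With `t` in place of `s⁻¹`, each entry is a polynomial identity modulo `s * t = 1`.
    generalize s⁻¹ = t at hst
    ext i j
    fin_cases i <;> fin_cases j <;> simp <;> grind
  rw [← sub_eq_zero, key]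
  constructor
  · intro h
    simpa using congrFun (congrFun h 0) 1
  · intro h
    rw [h, zero_smul]
end

section
/- (Non-abelian SL(2,ℂ) representations of the trefoil knot group.) Let m, d, s ∈ ℂ with m ≠ 0 and s² = m, and let X = [[s,1],[0,s⁻¹]], Y = [[s,0],[−d,s⁻¹]] ∈ SL(2,ℂ), with ω := X·Y. Then the relation of the trefoil knot group presentation ⟨x,y | ωx = yω⟩ is satisfied, i.e. (X·Y)·X = Y·(X·Y) as matrices, if and only if d = m + m⁻¹ − 1. In particular, m uniquely determines the non-abelian representation in this normal form. -/
/-!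
Multiplying out with `s * s⁻¹ = 1` gives `XYX - YXY = (m + m⁻¹ - 1 - d) • !![0, 1; d, 0]`.
The matrix on the right has an entry `1`, so the difference vanishes exactly when the scalar does.
-/

open Matrix

/-- (Non-abelian `SL(2,ℂ)` representations of the trefoil knot group.)
With `X = [[s,1],[0,s⁻¹]]`, `Y = [[s,0],[−d,s⁻¹]]`, `s² = m`, and `ω = XY`, the relation
`ω X = Y ω` of the presentation `⟨x,y ∣ ωx = yω⟩`, i.e. `XYX = YXY`, holds iff
`d = m + m⁻¹ − 1`; in particular `m` uniquely determines the representation. -/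
theorem trefoil_representation (m d s : ℂ) (hm : m ≠ 0) (hs : s ^ 2 = m)
    (X Y : Matrix (Fin 2) (Fin 2) ℂ)
    (hX : X = !![s, 1; 0, s⁻¹]) (hY : Y = !![s, 0; -d, s⁻¹]) :
    X * Y * X = Y * (X * Y) ↔ d = m + m⁻¹ - 1 := by
  have hs0 : s ≠ 0 := by
    rintro rfl
    exact hm (by simpa using hs.symm)
  have hst : s * s⁻¹ = 1 := mul_inv_cancel₀ hs0
  have hmi : m⁻¹ = s⁻¹ ^ 2 := by rw [← hs, inv_pow]
  -- The defect of the relation is a scalar multiple of a matrix that is never zero.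
  have key : X * Y * X - Y * (X * Y) = (m + m⁻¹ - 1 - d) • !![0, 1; d, 0] := by
    rw [hX, hY, hmi, ← hs]
    generalize s⁻¹ = t at hst
    ext i j
    fin_cases i <;> fin_cases j <;> simp
    · ring
    · linear_combination -hst
    · linear_combination -d * hst
    · ring
  rw [← sub_eq_zero, key]
  constructor
  · intro h
    have h01 := congrFun (congrFun h 0) 1
    simp at h01
    linear_combination -h01
  · intro h
    rw [h, sub_self, zero_smul]
end

section
/- (Image of the longitude of the trefoil.) Let m, s ∈ ℂ with m ≠ 0, s² = m, and s ≠ s⁻¹ (i.e. m ≠ 1), and set d := m + m⁻¹ − 1, X = [[s,1],[0,s⁻¹]], Y = [[s,0],[−d,s⁻¹]]. Then the image of the longitude λ = yx²yx⁻⁴ is Y·X·X·Y·(X⁻¹)⁴ = [[−m⁻³, (m³ − m⁻³)/(s − s⁻¹)],[0, −m³]]. -/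
open Matrix

/-- (Image of the longitude of the trefoil.) With `X = [[s,1],[0,s⁻¹]]`,
`Y = [[s,0],[−d,s⁻¹]]`, `s² = m ≠ 1`, and `d = m + m⁻¹ − 1`, the image of the longitude
`λ = yx²yx⁻⁴` is `Y X X Y (X⁻¹)⁴ = [[−m⁻³, (m³ − m⁻³)/(s − s⁻¹)],[0, −m³]]`. -/
theorem trefoil_longitude (m d s : ℂ) (hm : m ≠ 0) (hs : s ^ 2 = m)
    (hss : s ≠ s⁻¹) (hd : d = m + m⁻¹ - 1)
    (X Y : Matrix (Fin 2) (Fin 2) ℂ)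
    (hX : X = !![s, 1; 0, s⁻¹]) (hY : Y = !![s, 0; -d, s⁻¹]) :
    Y * X * X * Y * (X⁻¹) ^ 4 =
      !![-(m ^ 3)⁻¹, (m ^ 3 - (m ^ 3)⁻¹) / (s - s⁻¹); 0, -(m ^ 3)] := by
  subst hX hY hd hs
  have h0 : s ≠ 0 := fun h => hm (by simp [h])
  -- Since `s ^ 12 - 1 = (s ^ 2 - 1) * (s ^ 10 + ⋯ + 1)`, the upper right entry is a Laurent
  -- polynomial in `s`, so all four entries reduce to identities in `ℤ[s, s⁻¹]`.
  have hb : ((s ^ 2) ^ 3 - ((s ^ 2) ^ 3)⁻¹) / (s - s⁻¹) =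
      (s ^ 10 + s ^ 8 + s ^ 6 + s ^ 4 + s ^ 2 + 1) * (s ^ 5)⁻¹ := by
    have h2 : s - s⁻¹ ≠ 0 := sub_ne_zero.mpr hss
    rw [div_eq_iff h2]
    field_simp
    ring
  have hinv : (!![s, 1; 0, s⁻¹] : Matrix (Fin 2) (Fin 2) ℂ)⁻¹ = !![s⁻¹, -1; 0, s] := by
    apply Matrix.inv_eq_right_inv
    ext i j
    fin_cases i <;> fin_cases j <;> simp [Matrix.mul_apply, Fin.sum_univ_two, h0]
  rw [hb, hinv]
  simp only [pow_succ (!![s⁻¹, -1; 0, s] : Matrix (Fin 2) (Fin 2) ℂ), pow_zero, one_mul]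
  ext i j
  fin_cases i <;> fin_cases j <;>
    simp [Matrix.mul_apply, Fin.sum_univ_two, -mul_eq_zero] <;> field_simp <;> ring
end

section
/- (Non-abelian SL(2,ℂ) representations of the cinquefoil knot group.) Let m, d, s ∈ ℂ with m ≠ 0 and s² = m, and let X = [[s,1],[0,s⁻¹]], Y = [[s,0],[−d,s⁻¹]] ∈ SL(2,ℂ), with ω := X·Y·X·Y. Then the relation of the cinquefoil knot group presentation ⟨x,y | ωx = yω⟩ is satisfied, i.e. ω·X = Y·ω as matrices, if and only if d² − (2m + 2m⁻¹ − 1)·d + (m² − m + 1 − m⁻¹ + m⁻²) = 0. -/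
open Matrix

/-!
Since `X` and `Y` have the Riley normal form, a direct computation shows that `ω * X - Y * ω` is
the antidiagonal matrix with entries `q` and `d * q`, where `q` is the quadratic polynomial in `d`
of the statement (the Riley polynomial). It therefore vanishes exactly when `q = 0`.
-/

/-- (Non-abelian `SL(2,ℂ)` representations of the cinquefoil knot group.)
With `X = [[s,1],[0,s⁻¹]]`, `Y = [[s,0],[−d,s⁻¹]]`, `s² = m`, and `ω = XYXY`, the
relation `ω X = Y ω` of the presentation `⟨x,y ∣ ωx = yω⟩` holds iff
`d² − (2m + 2m⁻¹ − 1)d + (m² − m + 1 − m⁻¹ + m⁻²) = 0`. -/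
theorem cinquefoil_representation (m d s : ℂ) (hm : m ≠ 0) (hs : s ^ 2 = m)
    (X Y ω : Matrix (Fin 2) (Fin 2) ℂ)
    (hX : X = !![s, 1; 0, s⁻¹]) (hY : Y = !![s, 0; -d, s⁻¹])
    (hω : ω = X * Y * X * Y) :
    ω * X = Y * ω ↔
      d ^ 2 - (2 * m + 2 * m⁻¹ - 1) * d +
        (m ^ 2 - m + 1 - m⁻¹ + (m ^ 2)⁻¹) = 0 := by
  have hs0 : s ≠ 0 := by
    rintro rfl
    exact hm (by simpa using hs.symm)
  have key : ω * X - Y * ω =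
      (d ^ 2 - (2 * m + 2 * m⁻¹ - 1) * d + (m ^ 2 - m + 1 - m⁻¹ + (m ^ 2)⁻¹)) •
        !![0, 1; d, 0] := by
    subst hω hX hY hs
    ext i j
    fin_cases i <;> fin_cases j <;> simp <;> field_simp <;>
      ring
  rw [← sub_eq_zero, key]
  constructor
  · intro h
    -- the upper right entry of the antidiagonal matrix is `q` itself
    simpa using congrFun (congrFun h 0) 1
  · intro h
    rw [h, zero_smul]
end

section
/- (Image of the longitude of the cinquefoil.) Let m, d, s ∈ ℂ with m ≠ 0, s² = m, s ≠ s⁻¹ (i.e. m ≠ 1), and suppose d² − (2m + 2m⁻¹ − 1)·d + (m² − m + 1 − m⁻¹ + m⁻²) = 0. Let X = [[s,1],[0,s⁻¹]], Y = [[s,0],[−d,s⁻¹]]. Then the image of the longitude λ = yxyxy⁻¹xyxyx⁻⁷, namely Y·X·Y·X·Y⁻¹·X·Y·X·Y·(X⁻¹)⁷, equals [[−m⁻⁵, (m⁵ − m⁻⁵)/(s − s⁻¹)],[0, −m⁵]] (and this holds for both roots d of the quadratic). -/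
/-!
Put `W = XY` and `τ = tr W = m + m⁻¹ - d`. The quadratic satisfied by `d` says exactly that
`τ² = τ + 1`, so by Cayley-Hamilton `W⁵ = -1` (`word_pow_five`); it also gives the braid-type
relation `XYXYX = YXYXY` (`word_relation`). Hence the element `Z = XYXYX = YXYXY` satisfies
`Z² = XYXYX · YXYXY = W⁵ = -1`, and the relation rewrites the longitude as
`x⁻¹ Z² x⁻⁹` (`longitude_word`). The longitude therefore acts as `-X⁻¹⁰`, and the powers of the
upper triangular matrix `X⁻¹` are explicit.

The matrix entries are handled as polynomials in `s` and `t = s⁻¹` subject to `s * t = 1`.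
-/

open Matrix

/-- The word manipulation behind the theorem: `A` and `B` play the roles of `x⁻¹` and `y⁻¹`,
and the full twist `(xy)⁵` acts as `-1`. -/
lemma longitude_word {R : Type*} [Ring R] {x y A B : R} (hxA : x * A = 1) (hAx : A * x = 1)
    (hBy : B * y = 1) (hrel : x * y * x * y * x = y * x * y * x * y)
    (hW : (x * y) ^ 5 = -1) :
    y * x * y * x * B * x * y * x * y = -A ^ 3 := by
  -- `y⁻¹ω = ωx⁻¹` for `ω = xyxy`
  have h1 : B * (x * y * x * y) = x * y * x * y * A := by
    calc B * (x * y * x * y) = B * (x * y * x * y * (x * A)) := by rw [hxA, mul_one]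
      _ = B * (x * y * x * y * x) * A := by simp only [mul_assoc]
      _ = (B * y) * (x * y * x * y * A) := by rw [hrel]; simp only [mul_assoc]
      _ = x * y * x * y * A := by rw [hBy, one_mul]
  calc y * x * y * x * B * x * y * x * y
      = y * x * y * x * (B * (x * y * x * y)) := by simp only [mul_assoc]
    _ = (A * x) * (y * x * y * x) * ((x * y * x * y) * (x * A) * A) := by
        rw [h1, hAx, hxA, one_mul, mul_one]
    _ = A * (x * y * x * y * x) * (x * y * x * y * x) * A * A := by simp only [mul_assoc]
    _ = A * (x * y * x * y * x) * (y * x * y * x * y) * A * A := by rw [← hrel]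
    _ = A * (x * y) ^ 5 * A * A := by simp only [pow_succ, pow_zero, one_mul, mul_assoc]
    _ = -A ^ 3 := by rw [hW]; simp [pow_succ]

lemma word_sq {s t d : ℂ} (hst : s * t = 1) :
    (!![s, 1; 0, t] * !![s, 0; -d, t]) ^ 2 =
      (s ^ 2 + t ^ 2 - d) • (!![s, 1; 0, t] * !![s, 0; -d, t]) - 1 := by
  ext i j
  fin_cases i <;> fin_cases j <;> simp [pow_two] <;> grind

lemma word_pow_five {s t d : ℂ} (hst : s * t = 1)
    (hτ : (s ^ 2 + t ^ 2 - d) ^ 2 = (s ^ 2 + t ^ 2 - d) + 1) :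
    (!![s, 1; 0, t] * !![s, 0; -d, t]) ^ 5 = -1 := by
  have h2 := word_sq (d := d) hst
  generalize !![s, 1; 0, t] * !![s, 0; -d, t] = W at *
  generalize s ^ 2 + t ^ 2 - d = τ at *
  have h3 : W ^ 3 = τ • W - τ • (1 : Matrix (Fin 2) (Fin 2) ℂ) := by
    rw [pow_succ, h2, sub_mul, smul_mul_assoc, ← pow_two, h2, one_mul]
    match_scalars <;> grind
  rw [show 5 = 3 + 2 from rfl, pow_add, h3, h2]
  have hWW : W * W = τ • W - 1 := by rw [← pow_two, h2]
  simp only [sub_mul, mul_sub, smul_mul_assoc, mul_smul_comm, one_mul, mul_one, hWW]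
  match_scalars <;> grind

lemma word_relation {s t d : ℂ} (hst : s * t = 1)
    (hτ : (s ^ 2 + t ^ 2 - d) ^ 2 = (s ^ 2 + t ^ 2 - d) + 1) :
    !![s, 1; 0, t] * !![s, 0; -d, t] * !![s, 1; 0, t] * !![s, 0; -d, t] * !![s, 1; 0, t] =
      !![s, 0; -d, t] * !![s, 1; 0, t] * !![s, 0; -d, t] * !![s, 1; 0, t] * !![s, 0; -d, t] := by
  ext i j
  fin_cases i <;> fin_cases j <;> simp <;> grind

/-- (Image of the longitude of the cinquefoil.) With `X = [[s,1],[0,s⁻¹]]`,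
`Y = [[s,0],[−d,s⁻¹]]`, `s² = m ≠ 1`, and
`d² − (2m + 2m⁻¹ − 1)d + (m² − m + 1 − m⁻¹ + m⁻²) = 0`, the image of the longitude
`λ = yxyxy⁻¹xyxyx⁻⁷`, namely `Y X Y X Y⁻¹ X Y X Y (X⁻¹)⁷`, equals
`[[−m⁻⁵, (m⁵ − m⁻⁵)/(s − s⁻¹)],[0, −m⁵]]`, for both roots `d` of the quadratic. -/
theorem cinquefoil_longitude (m d s : ℂ) (hm : m ≠ 0) (hs : s ^ 2 = m)
    (hss : s ≠ s⁻¹)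
    (hd : d ^ 2 - (2 * m + 2 * m⁻¹ - 1) * d +
      (m ^ 2 - m + 1 - m⁻¹ + (m ^ 2)⁻¹) = 0)
    (X Y : Matrix (Fin 2) (Fin 2) ℂ)
    (hX : X = !![s, 1; 0, s⁻¹]) (hY : Y = !![s, 0; -d, s⁻¹]) :
    Y * X * Y * X * Y⁻¹ * X * Y * X * Y * (X⁻¹) ^ 7 =
      !![-(m ^ 5)⁻¹, (m ^ 5 - (m ^ 5)⁻¹) / (s - s⁻¹); 0, -(m ^ 5)] := by
  have hs0 : s ≠ 0 := by
    rintro rfl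
    simp at hss
  have hst : s * s⁻¹ = 1 := mul_inv_cancel₀ hs0
  have hsub : s - s⁻¹ ≠ 0 := sub_ne_zero.mpr hss
  have hsq : s ^ 2 - 1 ≠ 0 := by
    intro h
    apply hsub
    linear_combination s⁻¹ * h - s * hst
  have hXinv : X⁻¹ = !![s⁻¹, -1; 0, s] := by
    apply Matrix.inv_eq_right_inv
    rw [hX, Matrix.mul_fin_two, Matrix.one_fin_two]
    simp [hs0]
  have hXdet : IsUnit X.det := by simp [hX, Matrix.det_fin_two, hs0]
  have hYdet : IsUnit Y.det := by simp [hY, Matrix.det_fin_two, hs0]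
  have hτ : (s ^ 2 + s⁻¹ ^ 2 - d) ^ 2 = (s ^ 2 + s⁻¹ ^ 2 - d) + 1 := by
    have hmi : m⁻¹ = s⁻¹ ^ 2 := by rw [← hs, inv_pow]
    rw [← inv_pow, hmi, ← hs] at hd
    generalize s⁻¹ = t at *
    linear_combination hd + 2 * (s * t + 1) * hst
  have hrel : X * Y * X * Y * X = Y * X * Y * X * Y := by
    rw [hX, hY]; exact word_relation hst hτ
  have hW : (X * Y) ^ 5 = -1 := by
    rw [hX, hY]; exact word_pow_five hst hτ
  rw [longitude_word (Matrix.mul_nonsing_inv X hXdet) (Matrix.nonsing_inv_mul X hXdet)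
    (Matrix.nonsing_inv_mul Y hYdet) hrel hW, neg_mul, ← pow_add, hXinv]
  have hpow : ∀ n : ℕ, !![s⁻¹, -1; 0, s] ^ n =
      !![(s ^ n)⁻¹, -((s ^ n - (s ^ n)⁻¹) / (s - s⁻¹)); 0, s ^ n] := by
    intro n
    induction n with
    | zero => simp [Matrix.one_fin_two]
    | succ n ih =>
      rw [pow_succ, ih, Matrix.mul_fin_two]
      ext i j
      fin_cases i <;> fin_cases j <;> simp [pow_succ, mul_comm]
      field_simp
      ring
  have hm5 : s ^ (3 + 7) = m ^ 5 := by rw [← hs, ← pow_mul]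
  rw [hpow, hm5]
  ext i j
  fin_cases i <;> fin_cases j <;> simp
end

section
/- (Traces for the cinquefoil representations, confirming the Dubois–Kashaev parametrization.) Let m, s ∈ ℂ with m ≠ 0 and s² = m, let ε ∈ {+1, −1}, and set d := m + m⁻¹ − (1 + ε√5)/2 (the two roots of d² − (2m + 2m⁻¹ − 1)d + m² − m + 1 − m⁻¹ + m⁻² = 0). Let X = [[s,1],[0,s⁻¹]], Y = [[s,0],[−d,s⁻¹]]. With g := yxyxy and h := xy (which satisfy g² = h⁵ in the cinquefoil group), the images satisfy trace(Y·X·Y·X·Y) = 0 and trace(X·Y) = (1 + ε√5)/2; that is, tr ρ₊(h) = 2cos(π/5) and tr ρ₋(h) = 2cos(3π/5), while tr ρ±(g) = 0. -/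
/-!
Write `φ = (1 + ε√5)/2`, so that `φ² = φ + 1`. The trace of `XY` is `m + m⁻¹ - d = φ` by the
choice of `d`. Since `det (XY) = 1`, Cayley–Hamilton gives `(XY)² = φ XY - 1`, hence
`tr (YXYXY) = φ tr (YXY) - tr Y = (φ (φ - 1) - 1) (s + s⁻¹) = 0`, using
`tr (YXY) = tr Y tr (XY) - tr X` and `tr X = tr Y = s + s⁻¹`. In the proof this is a polynomial
identity in `s`, `s⁻¹`, `φ` modulo `s s⁻¹ = 1` and `φ² = φ + 1`.
-/

/-- (Traces for the cinquefoil representations, confirming the Dubois–Kashaev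
parametrization.) With `X = [[s,1],[0,s⁻¹]]`, `Y = [[s,0],[−d,s⁻¹]]`, `s² = m`,
`ε = ±1`, and `d = m + m⁻¹ − (1 + ε√5)/2` (the two roots of the quadratic
`d² − (2m + 2m⁻¹ − 1)d + m² − m + 1 − m⁻¹ + m⁻² = 0`), the images of `g = yxyxy` and
`h = xy` satisfy `trace(YXYXY) = 0` and `trace(XY) = (1 + ε√5)/2`; note
`2cos(π/5) = (1+√5)/2` and `2cos(3π/5) = (1−√5)/2`. -/
theorem cinquefoil_traces (m d s : ℂ) (ε : ℝ) (hm : m ≠ 0) (hs : s ^ 2 = m)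
    (hε : ε = 1 ∨ ε = -1)
    (hd : d = m + m⁻¹ - (1 + (ε : ℂ) * (Real.sqrt 5 : ℂ)) / 2)
    (X Y : Matrix (Fin 2) (Fin 2) ℂ)
    (hX : X = !![s, 1; 0, s⁻¹]) (hY : Y = !![s, 0; -d, s⁻¹]) :
    Matrix.trace (Y * X * Y * X * Y) = 0 ∧
      Matrix.trace (X * Y) = (1 + (ε : ℂ) * (Real.sqrt 5 : ℂ)) / 2 := by
  have hs0 : s ≠ 0 := by
    rintro rfl
    exact hm (by simpa using hs.symm)
  have hst : s * s⁻¹ = 1 := mul_inv_cancel₀ hs0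
  have hφ : ((1 + (ε : ℂ) * (Real.sqrt 5 : ℂ)) / 2) ^ 2
      = (1 + (ε : ℂ) * (Real.sqrt 5 : ℂ)) / 2 + 1 := by
    have h5 : (Real.sqrt 5 : ℂ) ^ 2 = 5 := by
      rw [← Complex.ofReal_pow, Real.sq_sqrt (by norm_num)]
      norm_num
    have hε2 : (ε : ℂ) ^ 2 = 1 := by
      rcases hε with rfl | rfl <;> norm_num
    linear_combination (ε : ℂ) ^ 2 / 4 * h5 + 5 / 4 * hε2
  have hmi : m⁻¹ = s⁻¹ ^ 2 := by rw [← hs, inv_pow]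
  rw [hmi, ← hs] at hd
  subst hX hY
  generalize (1 + (ε : ℂ) * (Real.sqrt 5 : ℂ)) / 2 = φ at *
  generalize s⁻¹ = t at *
  simp only [Matrix.trace_fin_two, Matrix.mul_fin_two, Matrix.of_apply, Matrix.cons_val_zero,
    Matrix.cons_val_one, Matrix.cons_val', Matrix.cons_val_fin_one]
  constructor
  · clear hε hm hs hmi
    grind
  · linear_combination -hd
end
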